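/- Let Ω ⊂ ℝ² be a bounded open convex set with nonempty interior, and let f be a continuous function on the closure of Ω that is positive and subharmonic on Ω (Δf ≥ 0). Then (1/|Ω|) ∫_Ω f dx ≤ (3/|∂Ω|) ∫_{∂Ω} f dσ. -/

import Mathlib

open MeasureTheory

/-- The Laplacian of `f : ℝ² → ℝ`, as the sum of the second partial derivatives. -/
noncomputable def laplacian (f : EuclideanSpace ℝ (Fin 2) → ℝ)
    (x : EuclideanSpace ℝ (Fin 2)) : ℝ :=
  ∑ i : Fin 2,
    fderiv ℝ (fun y => fderiv ℝ f y (EuclideanSpace.single i (1 : ℝ))) x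
      (EuclideanSpace.single i (1 : ℝ))


section PartA
open Set Filter Topology
open scoped ContDiff

local notation "E2" => EuclideanSpace ℝ (Fin 2)

theorem vfield_deriv (Ω : Set E2) (f φ : E2 → ℝ)
    (hf1 : ∀ x ∈ Ω, DifferentiableAt ℝ f x)
    (hf2 : ∀ x ∈ Ω, DifferentiableAt ℝ (fun y => fderiv ℝ f y) x)
    (hφ : ContDiff ℝ ∞ φ) (hs : tsupport φ ⊆ Ω) (e : E2) (x : E2) :
    ∃ L : E2 →L[ℝ] ℝ, HasFDerivAt (fun y => φ y * fderiv ℝ f y e - f y * fderiv ℝ φ y e) L x ∧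
      L e = φ x * fderiv ℝ (fun y => fderiv ℝ f y e) x e
        - f x * fderiv ℝ (fun y => fderiv ℝ φ y e) x e := by
  have hφ1 : Differentiable ℝ φ := hφ.differentiable (by simp)
  have hφ2 : Differentiable ℝ (fun y => fderiv ℝ φ y) :=
    (hφ.fderiv_right (m := 1) (by norm_cast)).differentiable (by simp)
  have hφ2e : Differentiable ℝ (fun y => fderiv ℝ φ y e) := fun y =>
    (hφ2 y).clm_apply (differentiableAt_const e)
  by_cases hx : x ∈ Ω
  · have h2e : DifferentiableAt ℝ (fun y => fderiv ℝ f y e) x :=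
      (hf2 x hx).clm_apply (differentiableAt_const e)
    refine ⟨_, ((hφ1 x).hasFDerivAt.mul h2e.hasFDerivAt).sub
      ((hf1 x hx).hasFDerivAt.mul (hφ2e x).hasFDerivAt), ?_⟩
    simp
    ring
  · have hx' : x ∉ tsupport φ := fun h => hx (hs h)
    have h0 : φ =ᶠ[𝓝 x] 0 := notMem_tsupport_iff_eventuallyEq.mp hx'
    have h1 : (fun y => fderiv ℝ φ y e) =ᶠ[𝓝 x] 0 := by
      filter_upwards [h0.eventuallyEq_nhds] with y hy
      rw [hy.fderiv_eq]; simp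
    refine ⟨0, ?_, ?_⟩
    · refine (hasFDerivAt_const (0:ℝ) x).congr_of_eventuallyEq ?_
      filter_upwards [h0, h1] with y hy hy'
      simp at hy hy'
      simp [hy, hy']
    · rw [h1.fderiv_eq, h0.self_of_nhds]; simp

theorem lap_cont (φ : E2 → ℝ) (hφ : ContDiff ℝ ∞ φ) (e : E2) :
    Continuous (fun x => fderiv ℝ (fun y => fderiv ℝ φ y e) x e) := by
  have h1 : ContDiff ℝ 1 (fun y => fderiv ℝ φ y e) :=
    (hφ.fderiv_right (m := 1) (by norm_cast)).clm_apply contDiff_const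
  exact (h1.continuous_fderiv (by simp)).clm_apply continuous_const

theorem lap_zero (φ : E2 → ℝ) (e : E2) (x : E2) (hx' : x ∉ tsupport φ) :
    fderiv ℝ (fun y => fderiv ℝ φ y e) x e = 0 := by
    have h0 : φ =ᶠ[𝓝 x] 0 := notMem_tsupport_iff_eventuallyEq.mp hx'
    have h1 : (fun y => fderiv ℝ φ y e) =ᶠ[𝓝 x] 0 := by
      filter_upwards [h0.eventuallyEq_nhds] with y hy
      rw [hy.fderiv_eq]; simp
    rw [h1.fderiv_eq]; simp

theorem cont_mul_of_supp (Ω : Set E2) (hΩo : IsOpen Ω) (f g : E2 → ℝ) (C : Set E2)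
    (hC : IsClosed C) (hCΩ : C ⊆ Ω) (hfc : ContinuousOn f Ω) (hg : Continuous g)
    (h0 : ∀ x ∉ C, g x = 0) : Continuous (fun x => f x * g x) := by
  rw [continuous_iff_continuousAt]
  intro x
  by_cases hx : x ∈ Ω
  · exact (hfc.continuousAt (hΩo.mem_nhds hx)).mul hg.continuousAt
  · have : (fun x => f x * g x) =ᶠ[𝓝 x] fun _ => 0 := by
      filter_upwards [hC.isOpen_compl.mem_nhds (fun h => hx (hCΩ h))] with y hy
      rw [h0 y hy, mul_zero]
    exact continuousAt_const.congr this.symm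

theorem weak_lap (Ω : Set E2) (hΩo : IsOpen Ω) (f φ : E2 → ℝ)
    (hf1 : ∀ x ∈ Ω, DifferentiableAt ℝ f x)
    (hf2 : ∀ x ∈ Ω, DifferentiableAt ℝ (fun y => fderiv ℝ f y) x)
    (hsub : ∀ x ∈ Ω, 0 ≤ laplacian f x)
    (hφ : ContDiff ℝ ∞ φ) (hc : HasCompactSupport φ) (hs : tsupport φ ⊆ Ω)
    (h0 : ∀ x, 0 ≤ φ x) : 0 ≤ ∫ x, f x * laplacian φ x := by
  set T : (Fin 2 → ℝ) → E2 := WithLp.toLp 2 with hT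
  let Tl : (Fin 2 → ℝ) ≃L[ℝ] E2 := (PiLp.continuousLinearEquiv 2 ℝ (fun _ : Fin 2 => ℝ)).symm
  have hTl : ∀ x, Tl x = T x := fun x => rfl
  -- box
  obtain ⟨R, hR, hRs⟩ : ∃ R : ℝ, 0 < R ∧ ∀ x ∈ tsupport φ, ∀ i, |x i| < R := by
    obtain ⟨R, hR⟩ := hc.isCompact.isBounded.exists_norm_le
    refine ⟨max R 0 + 1, by positivity, fun x hx i => ?_⟩
    have h1 := hR x hx
    have h2 := PiLp.norm_apply_le x i
    have := le_max_left R 0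
    rw [Real.norm_eq_abs] at h2
    linarith
  let I : BoxIntegral.Box (Fin 2) := ⟨fun _ => -R, fun _ => R, fun _ => by linarith⟩
  let e : Fin 2 → E2 := fun i => EuclideanSpace.single i (1:ℝ)
  choose L hL hLe using fun (i : Fin 2) x => vfield_deriv Ω f φ hf1 hf2 hφ hs (e i) x
  have hTe : ∀ i, Tl (Pi.single i 1) = e i := by
    intro i; rfl
  have key : ∀ i : Fin 2, BoxIntegral.HasIntegral I BoxIntegral.IntegrationParams.GP
      (fun x => L i (T x) (e i)) BoxIntegral.BoxAdditiveMap.volume 0 := by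
    intro i
    have := BoxIntegral.hasIntegral_GP_pderiv I
      (fun y => φ (T y) * fderiv ℝ f (T y) (e i) - f (T y) * fderiv ℝ φ (T y) (e i))
      (fun x => (L i (T x)).comp (Tl : (Fin 2 → ℝ) →L[ℝ] E2)) ∅ countable_empty
      (by simp) (fun x _ => ((hL i (T x)).comp x Tl.hasFDerivAt).hasFDerivWithinAt) i
    have hz : ∀ y : E2, y ∉ tsupport φ → φ y * fderiv ℝ f y (e i) - f y * fderiv ℝ φ y (e i) = 0 := by
      intro y hy
      have h0 : φ =ᶠ[𝓝 y] 0 := notMem_tsupport_iff_eventuallyEq.mp hy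
      rw [h0.fderiv_eq, h0.self_of_nhds]; simp
    have hface : ∀ c : ℝ, |c| = R → ∀ y, T (i.insertNth c y) ∉ tsupport φ := by
      intro c hc y hy
      have := hRs _ hy i
      simp [hT] at this
      linarith
    have e1 : (fun y => φ (T (i.insertNth (I.upper i) y)) * fderiv ℝ f (T (i.insertNth (I.upper i) y)) (e i) - f (T (i.insertNth (I.upper i) y)) * fderiv ℝ φ (T (i.insertNth (I.upper i) y)) (e i)) = fun _ => 0 := by
      ext y; exact hz _ (hface _ (abs_of_pos hR) y)
    have e2 : (fun y => φ (T (i.insertNth (I.lower i) y)) * fderiv ℝ f (T (i.insertNth (I.lower i) y)) (e i) - f (T (i.insertNth (I.lower i) y)) * fderiv ℝ φ (T (i.insertNth (I.lower i) y)) (e i)) = fun _ => 0 := by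
      ext y; exact hz _ (hface _ (by simp [I, abs_of_pos hR]) y)
    rw [e1, e2, sub_self] at this
    exact this
  have key2 : BoxIntegral.HasIntegral I BoxIntegral.IntegrationParams.GP
      (fun x => φ (T x) * laplacian f (T x) - f (T x) * laplacian φ (T x))
      BoxIntegral.BoxAdditiveMap.volume 0 := by
    have := (key 0).add (key 1)
    rw [add_zero] at this
    convert this using 1
    ext x
    simp only [Pi.add_apply, hLe, laplacian, Fin.sum_univ_two, e]
    ring
  have hfcon : ContinuousOn f Ω := fun x hx => (hf1 x hx).continuousAt.continuousWithinAt
  have hlapc : Continuous (laplacian φ) := by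
    unfold laplacian
    exact continuous_finsetSum _ fun i _ => lap_cont φ hφ _
  have hlap0 : ∀ x ∉ tsupport φ, laplacian φ x = 0 := by
    intro x hx
    unfold laplacian
    exact Finset.sum_eq_zero fun i _ => lap_zero φ _ x hx
  have hcont : Continuous (fun x => f x * laplacian φ x) :=
    cont_mul_of_supp Ω hΩo f _ (tsupport φ) (isClosed_tsupport φ) hs hfcon hlapc hlap0
  have hcT : Continuous (fun x => f (T x) * laplacian φ (T x)) := hcont.comp Tl.continuous
  have hbox := ContinuousOn.hasBoxIntegral (μ := volume) (I := I) hcT.continuousOn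
    BoxIntegral.IntegrationParams.GP
  have key3 := key2.add hbox
  have key4 : BoxIntegral.HasIntegral I BoxIntegral.IntegrationParams.GP
      (fun x => φ (T x) * laplacian f (T x)) BoxIntegral.BoxAdditiveMap.volume
      (∫ x in I, f (T x) * laplacian φ (T x)) := by
    rw [zero_add] at key3
    convert key3 using 1
    ext x; simp
  have hpos : ∀ x, 0 ≤ φ (T x) * laplacian f (T x) := by
    intro x
    by_cases h : T x ∈ Ω
    · exact mul_nonneg (h0 _) (hsub _ h)
    · have : φ (T x) = 0 := by
        by_contra h'
        exact h (hs (subset_tsupport φ h'))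
      simp [this]
  have hnn : 0 ≤ ∫ x in I, f (T x) * laplacian φ (T x) := by
    have hnn' : 0 ≤ BoxIntegral.integral I BoxIntegral.IntegrationParams.GP
      (fun x => φ (T x) * laplacian f (T x)) (volume : Measure (Fin 2 → ℝ)).toBoxAdditive.toSMul := by
      refine BoxIntegral.integral_nonneg (fun x hx => hpos x) volume
    have h5 := key4.integral_eq
    exact hnn'.trans_eq h5
  have hI : ∫ x in I, f (T x) * laplacian φ (T x) = ∫ x, f (T x) * laplacian φ (T x) := by
    refine setIntegral_eq_integral_of_forall_compl_eq_zero fun x hx => ?_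
    have : T x ∉ tsupport φ := by
      intro h
      apply hx
      have h2 := hRs _ h
      rw [BoxIntegral.Box.mem_coe, BoxIntegral.Box.mem_def]
      intro i
      have := abs_lt.mp (h2 i)
      exact ⟨this.1, this.2.le⟩
    rw [hlap0 _ this, mul_zero]
  rw [hI] at hnn
  have := (PiLp.volume_preserving_toLp (Fin 2)).integral_comp
    (MeasurableEquiv.toLp 2 (Fin 2 → ℝ)).measurableEmbedding (fun x : E2 => f x * laplacian φ x)
  rw [← this]; exact hnn
end PartA


section PartD
open Set Filter Topology
open scoped ENNReal

local notation "E2" => EuclideanSpace ℝ (Fin 2)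

theorem e2_norm_sq (x : E2) : ‖x‖ ^ 2 = x 0 ^ 2 + x 1 ^ 2 := by
  rw [EuclideanSpace.norm_sq_eq, Fin.sum_univ_two]; simp

theorem seg_mem (Ω : Set E2) (hΩo : IsOpen Ω) (hΩc : Convex ℝ Ω) {z q : E2} (hz : z ∈ Ω)
    (hq : q ∈ closure Ω) {s t : ℝ} (hs : 0 < s) (ht : 0 ≤ t) (hst : s + t = 1) :
    s • z + t • q ∈ Ω := by
  have := hΩc.combo_interior_closure_mem_interior (x := z) (y := q) (by rwa [hΩo.interior_eq]) hq hs ht hst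
  rwa [hΩo.interior_eq] at this

theorem cross_bound (Ω : Set E2) (hΩo : IsOpen Ω) (hΩc : Convex ℝ Ω) (ρ : ℝ) (hρ : 0 < ρ)
    (hball : Metric.ball 0 ρ ⊆ Ω) (p q : E2) (hp : p ∈ frontier Ω) (hq : q ∈ frontier Ω)
    (hpq : 0 < p 0 * q 0 + p 1 * q 1) :
    ρ ^ 2 / 2 * ‖p - q‖ ^ 2 ≤ (p 0 * q 1 - p 1 * q 0) ^ 2 := by
  rw [hΩo.frontier_eq] at hp hq
  have hn : ∀ x : E2, x ∉ Ω → ρ ^ 2 ≤ x 0 ^ 2 + x 1 ^ 2 := by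
    intro x hx
    by_contra! h
    rw [← e2_norm_sq] at h
    apply hx; apply hball
    rw [mem_ball_zero_iff]
    exact lt_of_pow_lt_pow_left₀ 2 hρ.le h
  have hp2 := hn p hp.2
  have hq2 := hn q hq.2
  rw [e2_norm_sq]
  simp only [PiLp.sub_apply]
  set v0 := q 0 - p 0 with hv0
  set v1 := q 1 - p 1 with hv1
  by_contra! hlt
  have hV : 0 < v0 ^ 2 + v1 ^ 2 := by
    by_contra! h
    have h1 : v0 = 0 := by nlinarith [sq_nonneg v0, sq_nonneg v1]
    have h2 : v1 = 0 := by nlinarith [sq_nonneg v0, sq_nonneg v1]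
    have e1 : p 0 - q 0 = 0 := by linarith
    have e2 : p 1 - q 1 = 0 := by linarith
    rw [e1, e2] at hlt
    nlinarith [sq_nonneg (p 0 * q 1 - p 1 * q 0)]
  set V := v0 ^ 2 + v1 ^ 2 with hVd
  set t : ℝ := -(p 0 * v0 + p 1 * v1) / V with ht
  have htV : t * V = -(p 0 * v0 + p 1 * v1) := by rw [ht]; field_simp
  set z : E2 := p + t • (q - p) with hz
  have hz0 : z 0 = p 0 + t * v0 := by simp [hz, hv0]
  have hz1 : z 1 = p 1 + t * v1 := by simp [hz, hv1]
  have hzp : z 0 * v0 + z 1 * v1 = 0 := by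
    rw [hz0, hz1]; linear_combination htV
  have hzc : (z 0 ^ 2 + z 1 ^ 2) * V = (p 0 * q 1 - p 1 * q 0) ^ 2 := by
    have h1 : p 0 * q 1 - p 1 * q 0 = z 0 * v1 - z 1 * v0 := by
      rw [hz0, hz1, hv0, hv1]; ring
    rw [h1, hVd]
    linear_combination (z 0 * v0 + z 1 * v1) * hzp
  have hzs : z 0 ^ 2 + z 1 ^ 2 < ρ ^ 2 / 2 := by
    rw [← hzc] at hlt
    have : (p 0 - q 0) ^ 2 + (p 1 - q 1) ^ 2 = V := by rw [hVd, hv0, hv1]; ring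
    rw [this] at hlt
    exact lt_of_mul_lt_mul_right hlt hV.le
  have hzΩ : z ∈ Ω := by
    by_contra h
    have := hn z h
    nlinarith
  have ht0 : 0 < t := by
    by_contra! h
    apply hp.2
    have h1 : 0 < 1 - t := by linarith
    have := seg_mem Ω hΩo hΩc hzΩ hq.1 (s := 1 / (1 - t)) (t := -t / (1 - t))
      (by positivity) (div_nonneg (by linarith) h1.le) (by field_simp; ring)
    convert this using 1
    rw [hz]
    have h3 : (1 - t) ≠ 0 := h1.ne'
    ext i
    simp
    field_simp
    ring
  have ht1 : t < 1 := by
    by_contra! h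
    apply hq.2
    have := seg_mem Ω hΩo hΩc hzΩ hp.1 (s := 1 / t) (t := (t - 1) / t)
      (by positivity) (div_nonneg (by linarith) ht0.le) (by field_simp; ring)
    convert this using 1
    rw [hz]
    ext i
    simp
    field_simp
    ring
  have ep0 : p 0 = z 0 - t * v0 := by rw [hz0]; ring
  have ep1 : p 1 = z 1 - t * v1 := by rw [hz1]; ring
  have eq0 : q 0 = z 0 + (1 - t) * v0 := by rw [hz0, hv0]; ring
  have eq1 : q 1 = z 1 + (1 - t) * v1 := by rw [hz1, hv1]; ring
  have hP : ρ ^ 2 ≤ (z 0 ^ 2 + z 1 ^ 2) + t ^ 2 * V := by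
    refine hp2.trans_eq ?_
    rw [hVd]; rw [ep0, ep1]; linear_combination (-2 * t) * hzp
  have hQ : ρ ^ 2 ≤ (z 0 ^ 2 + z 1 ^ 2) + (1 - t) ^ 2 * V := by
    refine hq2.trans_eq ?_
    rw [hVd]; rw [eq0, eq1]; linear_combination (2 * (1 - t)) * hzp
  have hPQ : t * (1 - t) * V < (z 0 ^ 2 + z 1 ^ 2) := by
    have : p 0 * q 0 + p 1 * q 1 = (z 0 ^ 2 + z 1 ^ 2) - t * (1 - t) * V := by
      rw [hVd]; rw [ep0, ep1, eq0, eq1]; linear_combination (1 - 2 * t) * hzp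
    linarith
  rcases le_total t (1 - t) with h | h
  · have : t ^ 2 * V ≤ t * (1 - t) * V := by
      rw [sq]; gcongr
    linarith
  · have : (1 - t) ^ 2 * V ≤ t * (1 - t) * V := by
      rw [sq]; gcongr
    linarith

theorem std_tri_vol : volume {x : Fin 2 → ℝ | 0 < x 0 ∧ 0 < x 1 ∧ x 0 + x 1 < 1} = ENNReal.ofReal (1/2) := by
  have h := (volume_preserving_finTwoArrow ℝ).measure_preimage_equiv
    (regionBetween (fun _ => (0:ℝ)) (fun x => 1 - x) (Ioo 0 1))
  rw [Measure.volume_eq_prod, volume_regionBetween_eq_integral] at h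
  · have e : (MeasurableEquiv.finTwoArrow (α := ℝ)) ⁻¹' (regionBetween (fun _ => (0:ℝ)) (fun x => 1 - x) (Ioo 0 1)) =
      {x : Fin 2 → ℝ | 0 < x 0 ∧ 0 < x 1 ∧ x 0 + x 1 < 1} := by
      ext x
      simp [regionBetween, MeasurableEquiv.finTwoArrow]
      constructor
      · rintro ⟨⟨h1, h2⟩, h3, h4⟩; exact ⟨h1, h3, by linarith⟩
      · rintro ⟨h1, h2, h3⟩; exact ⟨⟨h1, by linarith⟩, h2, by linarith⟩
    rw [e] at h
    rw [h]
    congr 1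
    rw [← integral_Ioc_eq_integral_Ioo, ← intervalIntegral.integral_of_le (by norm_num)]
    simp only [Pi.sub_apply, sub_zero]
    rw [intervalIntegral.integral_sub (by simp) (by simp)]
    simp
    norm_num
  · exact integrableOn_const (by simp)
  · exact (Continuous.integrableOn_Icc (by fun_prop)).mono_set Ioo_subset_Icc_self
  · exact measurableSet_Ioo
  · intro x hx; simp at hx ⊢; linarith [hx.2]

theorem tri_vol (p q : E2) (U : Set E2)
    (hU : ∀ s t : ℝ, 0 < s → 0 < t → s + t < 1 → s • p + t • q ∈ U) :
    ENNReal.ofReal (|p 0 * q 1 - p 1 * q 0| / 2) ≤ volume U := by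
  have h1 : volume U = volume ((MeasurableEquiv.toLp 2 (Fin 2 → ℝ)) ⁻¹' U) :=
    ((PiLp.volume_preserving_toLp (Fin 2)).measure_preimage_equiv (f := MeasurableEquiv.toLp 2 (Fin 2 → ℝ)) U).symm
  rw [h1]
  let A : Matrix (Fin 2) (Fin 2) ℝ := !![p 0, q 0; p 1, q 1]
  have h2 := Measure.addHaar_image_linearMap (volume : Measure (Fin 2 → ℝ)) (Matrix.toLin' A)
    {x : Fin 2 → ℝ | 0 < x 0 ∧ 0 < x 1 ∧ x 0 + x 1 < 1}
  rw [std_tri_vol, LinearMap.det_toLin', Matrix.det_fin_two_of, ← ENNReal.ofReal_mul (abs_nonneg _)] at h2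
  have h3 : |p 0 * q 1 - p 1 * q 0| / 2 = |p 0 * q 1 - q 0 * p 1| * (1/2) := by
    rw [mul_comm (q 0)]; ring
  rw [h3, ← h2]
  apply measure_mono
  rintro _ ⟨x, ⟨hx0, hx1, hx⟩, rfl⟩
  have := hU (x 0) (x 1) hx0 hx1 hx
  rw [mem_preimage]
  convert this using 1
  ext i
  fin_cases i <;> simp [A, dotProduct, Fin.sum_univ_two, mul_comm]

noncomputable def skey (η : ℝ) (x : E2) : SignType × SignType × ℤ :=
  (SignType.sign (x 0), SignType.sign (x 1), ⌊x 1 / (x 0 * η)⌋)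


theorem sign_comb {a b s t : ℝ} (h : SignType.sign a = SignType.sign b) (hs : 0 < s) (ht : 0 < t) :
    SignType.sign (s * a + t * b) = SignType.sign a := by
  rcases lt_trichotomy a 0 with ha | ha | ha
  · have hb : b < 0 := by rw [sign_neg ha] at h; exact sign_eq_neg_one_iff.mp h.symm
    rw [sign_neg ha, sign_neg (by nlinarith)]
  · have hb : b = 0 := by rw [ha, sign_zero] at h; exact sign_eq_zero_iff.mp h.symm
    simp [ha, hb]
  · have hb : 0 < b := by rw [sign_pos ha] at h; exact sign_eq_one_iff.mp h.symm
    rw [sign_pos ha, sign_pos (by positivity)]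

theorem skey_cone (η : ℝ) (hη : 0 < η) (p q : E2) (h : skey η p = skey η q) (s t : ℝ)
    (hs : 0 < s) (ht : 0 < t) : skey η (s • p + t • q) = skey η p := by
  simp only [skey, Prod.mk.injEq] at h ⊢
  obtain ⟨h0, h1, h2⟩ := h
  simp only [PiLp.add_apply, PiLp.smul_apply, smul_eq_mul]
  refine ⟨sign_comb h0 hs ht, sign_comb h1 hs ht, ?_⟩
  have hp := Int.floor_eq_iff.mp (rfl : ⌊p 1 / (p 0 * η)⌋ = _)
  have hq := Int.floor_eq_iff.mp h2.symm
  rw [Int.floor_eq_iff]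
  set m : ℝ := (⌊p 1 / (p 0 * η)⌋ : ℝ)
  rcases lt_trichotomy (p 0) 0 with ha | ha | ha
  · have hb : q 0 < 0 := by rw [sign_neg ha] at h0; exact sign_eq_neg_one_iff.mp h0.symm
    have ha' : p 0 * η < 0 := mul_neg_of_neg_of_pos ha hη
    have hb' : q 0 * η < 0 := mul_neg_of_neg_of_pos hb hη
    have hc' : (s * p 0 + t * q 0) * η < 0 := by nlinarith
    rw [le_div_iff_of_neg ha', div_lt_iff_of_neg ha'] at hp
    rw [le_div_iff_of_neg hb', div_lt_iff_of_neg hb'] at hq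
    rw [le_div_iff_of_neg hc', div_lt_iff_of_neg hc']
    constructor <;> nlinarith
  · have hb : q 0 = 0 := by rw [ha, sign_zero] at h0; exact sign_eq_zero_iff.mp h0.symm
    rw [ha] at hp
    simp only [ha, hb, mul_zero, add_zero, zero_mul, div_zero] at hp ⊢
    exact hp
  · have hb : 0 < q 0 := by rw [sign_pos ha] at h0; exact sign_eq_one_iff.mp h0.symm
    have ha' : 0 < p 0 * η := by positivity
    have hb' : 0 < q 0 * η := by positivity
    have hc' : 0 < (s * p 0 + t * q 0) * η := by positivity
    rw [le_div_iff₀ ha', div_lt_iff₀ ha'] at hp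
    rw [le_div_iff₀ hb', div_lt_iff₀ hb'] at hq
    rw [le_div_iff₀ hc', div_lt_iff₀ hc']
    constructor <;> nlinarith

theorem sign_mul_nn {a b : ℝ} (h : SignType.sign a = SignType.sign b) : 0 ≤ a * b ∧ (a * b = 0 → a = 0) := by
  rcases lt_trichotomy a 0 with ha | ha | ha
  · have hb : b < 0 := by rw [sign_neg ha] at h; exact sign_eq_neg_one_iff.mp h.symm
    have := mul_pos_of_neg_of_neg ha hb
    exact ⟨this.le, fun h => absurd h this.ne'⟩
  · have hb : b = 0 := by rw [ha, sign_zero] at h; exact sign_eq_zero_iff.mp h.symm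
    simp [ha]
  · have hb : 0 < b := by rw [sign_pos ha] at h; exact sign_eq_one_iff.mp h.symm
    have := mul_pos ha hb
    exact ⟨this.le, fun h => absurd h this.ne'⟩

theorem skey_inner (η : ℝ) (p q : E2) (h : skey η p = skey η q) (hp : p ≠ 0) :
    0 < p 0 * q 0 + p 1 * q 1 := by
  simp only [skey, Prod.mk.injEq] at h
  obtain ⟨h0, h1, h2⟩ := h
  have a := sign_mul_nn h0
  have b := sign_mul_nn h1
  by_contra! hle
  apply hp
  ext i
  fin_cases i
  · exact a.2 (by linarith [a.1, b.1])
  · exact b.2 (by linarith [a.1, b.1])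

theorem skey_cross (η : ℝ) (hη : 0 < η) (R : ℝ) (p q : E2) (h : skey η p = skey η q)
    (hp : ‖p‖ ≤ R) (hq : ‖q‖ ≤ R) : |p 0 * q 1 - p 1 * q 0| ≤ R ^ 2 * η := by
  have hR : 0 ≤ R := (norm_nonneg p).trans hp
  simp only [skey, Prod.mk.injEq] at h
  obtain ⟨h0, h1, h2⟩ := h
  by_cases ha : p 0 = 0
  · have hb : q 0 = 0 := by rw [ha, sign_zero] at h0; exact sign_eq_zero_iff.mp h0.symm
    simp [ha, hb]; positivity
  · have hb : q 0 ≠ 0 := by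
      intro hb; rw [hb, sign_zero] at h0; exact ha (sign_eq_zero_iff.mp h0)
    have h3 := Int.abs_sub_lt_one_of_floor_eq_floor h2
    have e : p 0 * q 1 - p 1 * q 0 = -(p 0 * q 0 * η * (p 1 / (p 0 * η) - q 1 / (q 0 * η))) := by
      field_simp; ring
    have hp0 : |p 0| ≤ R := (by simpa using PiLp.norm_apply_le p 0 : |p 0| ≤ ‖p‖).trans hp
    have hq0 : |q 0| ≤ R := (by simpa using PiLp.norm_apply_le q 0 : |q 0| ≤ ‖q‖).trans hq
    rw [e, abs_neg, abs_mul, abs_mul, abs_mul, abs_of_pos hη]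
    calc |p 0| * |q 0| * η * |p 1 / (p 0 * η) - q 1 / (q 0 * η)| ≤ R * R * η * 1 := by gcongr
      _ = R ^ 2 * η := by ring

theorem sign_fib (y : SignType) (i : Fin 2) : MeasurableSet {x : E2 | SignType.sign (x i) = y} := by
  have h1 : Measurable fun x : E2 => x i := by fun_prop
  rcases y with _ | _ | _
  · have : {x : E2 | SignType.sign (x i) = SignType.zero} = (fun x : E2 => x i) ⁻¹' {0} := by
      ext x; exact sign_eq_zero_iff
    rw [this]; exact h1 (measurableSet_singleton 0)
  · have : {x : E2 | SignType.sign (x i) = SignType.neg} = (fun x : E2 => x i) ⁻¹' Iio 0 := by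
      ext x; exact sign_eq_neg_one_iff
    rw [this]; exact h1 measurableSet_Iio
  · have : {x : E2 | SignType.sign (x i) = SignType.pos} = (fun x : E2 => x i) ⁻¹' Ioi 0 := by
      ext x; exact sign_eq_one_iff
    rw [this]; exact h1 measurableSet_Ioi

theorem skey_meas (η : ℝ) (k : SignType × SignType × ℤ) : MeasurableSet (skey η ⁻¹' {k}) := by
  have h1 : Measurable fun x : E2 => ⌊x 1 / (x 0 * η)⌋ :=
    Int.measurable_floor.comp (by fun_prop)
  have : skey η ⁻¹' {k} = {x : E2 | SignType.sign (x 0) = k.1} ∩ ({x : E2 | SignType.sign (x 1) = k.2.1} ∩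
      (fun x : E2 => ⌊x 1 / (x 0 * η)⌋) ⁻¹' {k.2.2}) := by
    ext x
    simp [skey, Prod.ext_iff]
  rw [this]
  exact (sign_fib _ _).inter ((sign_fib _ _).inter (h1 (measurableSet_singleton _)))

theorem haus_bound0 (Ω : Set E2) (hΩo : IsOpen Ω) (hΩb : Bornology.IsBounded Ω)
    (hΩc : Convex ℝ Ω) (ρ : ℝ) (hρ : 0 < ρ) (hball : Metric.ball 0 ρ ⊆ Ω) :
    μH[(1 : ℝ)] (frontier Ω) ≤ ENNReal.ofReal (20 / (7 * ρ)) * volume Ω := by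
  obtain ⟨R, hR⟩ := hΩb.closure.exists_norm_le
  have h0Ω : (0 : E2) ∈ Ω := hball (by simpa using hρ)
  have hdist : ∀ p ∈ frontier Ω, ∀ q ∈ frontier Ω, 0 < p 0 * q 0 + p 1 * q 1 →
      dist p q ≤ 10 / (7 * ρ) * |p 0 * q 1 - p 1 * q 0| := by
    intro p hp q hq h
    have h1 := cross_bound Ω hΩo hΩc ρ hρ hball p q hp hq h
    rw [dist_eq_norm, ← abs_of_nonneg (norm_nonneg (p - q)),
      ← abs_of_pos (show 0 < 10 / (7 * ρ) by positivity), ← abs_mul]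
    apply sq_le_sq.mp
    rw [mul_pow, div_pow, div_mul_eq_mul_div, le_div_iff₀ (by positivity)]
    nlinarith [mul_nonneg (sq_nonneg ρ) (sq_nonneg ‖p - q‖)]
  have hne : ∀ p ∈ frontier Ω, p ≠ 0 := by
    rintro p hp rfl
    rw [hΩo.frontier_eq] at hp; exact hp.2 h0Ω
  have hη : ∀ n : ℕ, (0:ℝ) < 1 / ((n:ℝ) + 1) := fun n => Nat.one_div_pos_of_nat
  have hmain := Measure.hausdorffMeasure_le_liminf_tsum (β := ℕ) (ι := fun _ => SignType × SignType × ℤ) 1 (frontier Ω)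
    (l := atTop) (fun n => ENNReal.ofReal (10 / (7 * ρ) * (R ^ 2 * (1 / ((n:ℝ) + 1))))) ?_
    (fun n k => frontier Ω ∩ skey (1 / ((n:ℝ) + 1)) ⁻¹' {k}) ?_ ?_
  · refine hmain.trans ?_
    refine (liminf_le_liminf (v := fun _ => ENNReal.ofReal (20 / (7 * ρ)) * volume Ω) (Eventually.of_forall fun n => ?_)).trans_eq ?_
    · have hk : ∀ k, Metric.ediam (frontier Ω ∩ skey (1 / ((n:ℝ) + 1)) ⁻¹' {k}) ≤
          ENNReal.ofReal (20 / (7 * ρ)) * volume (Ω ∩ skey (1 / ((n:ℝ) + 1)) ⁻¹' {k}) := by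
        intro k
        apply Metric.ediam_le
        rintro p ⟨hp, hpk⟩ q ⟨hq, hqk⟩
        rw [mem_preimage, mem_singleton_iff] at hpk hqk
        have hpq := hpk.trans hqk.symm
        have h1 := hdist p hp q hq (skey_inner _ p q hpq (hne p hp))
        have h2 := tri_vol p q (Ω ∩ skey (1 / ((n:ℝ) + 1)) ⁻¹' {k}) (by
          intro s t hs ht hst
          refine ⟨?_, ?_⟩
          · have h3 := hΩc.closure (frontier_subset_closure hp) (frontier_subset_closure hq)
              (a := s / (s + t)) (b := t / (s + t)) (by positivity) (by positivity) (by field_simp)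
            have h4 := seg_mem Ω hΩo hΩc h0Ω h3 (s := 1 - (s + t)) (t := s + t) (by linarith) (by positivity) (by ring)
            convert h4 using 1
            ext i
            simp
            field_simp
          · rw [mem_preimage, mem_singleton_iff, skey_cone _ (hη n) p q hpq s t hs ht, hpk])
        rw [edist_dist]
        calc ENNReal.ofReal (dist p q) ≤ ENNReal.ofReal (20 / (7 * ρ) * (|p 0 * q 1 - p 1 * q 0| / 2)) := by
              apply ENNReal.ofReal_le_ofReal
              refine h1.trans_eq ?_
              field_simp; ring
          _ = ENNReal.ofReal (20 / (7 * ρ)) * ENNReal.ofReal (|p 0 * q 1 - p 1 * q 0| / 2) :=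
              ENNReal.ofReal_mul (by positivity)
          _ ≤ _ := by gcongr
      simp only [ENNReal.rpow_one]
      refine (ENNReal.tsum_le_tsum hk).trans ?_
      rw [ENNReal.tsum_mul_left]
      gcongr
      have hms : ∀ k, MeasurableSet (Ω ∩ skey (1 / ((n:ℝ) + 1)) ⁻¹' {k}) := fun k =>
        hΩo.measurableSet.inter (skey_meas _ k)
      rw [← measure_iUnion ?_ hms]
      · exact measure_mono (iUnion_subset fun k => inter_subset_left)
      · intro k l hkl
        refine Set.disjoint_left.mpr ?_
        rintro x ⟨_, hx⟩ ⟨_, hx'⟩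
        exact hkl (hx.symm.trans hx')
    · simp
  · rw [← ENNReal.ofReal_zero]
    apply ENNReal.tendsto_ofReal
    have := (tendsto_one_div_add_atTop_nhds_zero_nat (𝕜 := ℝ)).const_mul (R ^ 2) |>.const_mul (10 / (7 * ρ))
    simpa using this
  · refine Eventually.of_forall fun n k => ?_
    apply Metric.ediam_le
    rintro p ⟨hp, hpk⟩ q ⟨hq, hqk⟩
    rw [mem_preimage, mem_singleton_iff] at hpk hqk
    have hpq := hpk.trans hqk.symm
    have h1 := hdist p hp q hq (skey_inner _ p q hpq (hne p hp))
    rw [edist_dist]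
    apply ENNReal.ofReal_le_ofReal
    refine h1.trans ?_
    gcongr
    exact skey_cross _ (hη n) R p q hpq (hR p (frontier_subset_closure hp)) (hR q (frontier_subset_closure hq))
  · refine Eventually.of_forall fun n x hx => ?_
    rw [mem_iUnion]
    exact ⟨_, hx, rfl⟩

theorem haus_bound (Ω : Set E2) (hΩo : IsOpen Ω) (hΩb : Bornology.IsBounded Ω)
    (hΩc : Convex ℝ Ω) (c : E2) (ρ : ℝ) (hρ : 0 < ρ) (hball : Metric.ball c ρ ⊆ Ω) :
    μH[(1 : ℝ)] (frontier Ω) ≤ ENNReal.ofReal (20 / (7 * ρ)) * volume Ω := by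
  let T : E2 ≃ᵢ E2 := IsometryEquiv.addRight (-c)
  have hT : ∀ x, T x = x + -c := fun x => rfl
  have h := haus_bound0 (T '' Ω) (T.toHomeomorph.isOpenMap _ hΩo) ?_ ?_ ρ hρ ?_
  · have h1 : frontier (T '' Ω) = T '' frontier Ω := (T.toHomeomorph.image_frontier Ω).symm
    rw [h1, T.isometry.hausdorffMeasure_image (Or.inl zero_le_one)] at h
    have h2 : volume (T '' Ω) = volume Ω := by
      have : T '' Ω = (fun x => x + -c) '' Ω := rfl
      rw [this, image_add_right, measure_preimage_add_right]
    rwa [h2] at h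
  · have : T '' Ω = (fun x => x + -c) '' Ω := rfl
    exact T.isometry.lipschitz.isBounded_image hΩb
  · have : T '' Ω = (fun x => x + -c) '' Ω := rfl
    rw [this, image_add_right]
    exact hΩc.translate_preimage_left _
  · intro x hx
    refine ⟨x + c, hball ?_, by simp [hT]⟩
    simpa [Metric.mem_ball, dist_eq_norm] using hx

end PartD


section PartC
open Set Filter Topology
open scoped ENNReal ContDiff

local notation "E2" => EuclideanSpace ℝ (Fin 2)

noncomputable def ell (s : E2 × ℝ) (x : E2) : ℝ := inner ℝ s.1 x - s.2

noncomputable def dS (S : Finset (E2 × ℝ)) (hS : S.Nonempty) (x : E2) : ℝ :=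
  S.inf' hS (fun s => ell s x)

theorem ell_add (s : E2 × ℝ) (x v : E2) : ell s (x + v) = ell s x + inner ℝ s.1 v := by
  simp only [ell, inner_add_right]; ring

theorem ell_comb (s : E2 × ℝ) (x y : E2) (a b : ℝ) (h : a + b = 1) :
    ell s (a • x + b • y) = a * ell s x + b * ell s y := by
  simp only [ell, inner_add_right, inner_smul_right]; linear_combination s.2 * h

theorem ell_cont (s : E2 × ℝ) : Continuous (ell s) := by
  unfold ell; fun_prop

theorem dS_le (S : Finset (E2 × ℝ)) (hS : S.Nonempty) (x : E2) {s : E2 × ℝ} (hs : s ∈ S) :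
    dS S hS x ≤ ell s x := Finset.inf'_le _ hs

theorem dS_ex (S : Finset (E2 × ℝ)) (hS : S.Nonempty) (x : E2) : ∃ s ∈ S, dS S hS x = ell s x :=
  Finset.exists_mem_eq_inf' hS _

theorem dS_cont (S : Finset (E2 × ℝ)) (hS : S.Nonempty) : Continuous (dS S hS) := by
  unfold dS
  exact Continuous.finset_inf'_apply hS fun s _ => ell_cont s

theorem dS_lip (S : Finset (E2 × ℝ)) (hS : S.Nonempty) (hu : ∀ s ∈ S, ‖s.1‖ = 1) (x y : E2) :
    dS S hS x ≤ dS S hS y + ‖x - y‖ := by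
  obtain ⟨s, hs, h⟩ := dS_ex S hS y
  have h1 := dS_le S hS x hs
  have h2 := ell_add s y (x - y)
  have h3 := real_inner_le_norm s.1 (x - y)
  rw [hu s hs, one_mul] at h3
  rw [add_sub_cancel] at h2
  linarith

theorem polygon (Ω : Set E2) (hΩo : IsOpen Ω) (hΩb : Bornology.IsBounded Ω)
    (Q : Set E2) (hQc : IsCompact Q) (hQ : Convex ℝ Q) (hQn : Q.Nonempty)
    (hQΩ : Q ⊆ Ω) : ∃ (S : Finset (E2 × ℝ)) (hS : S.Nonempty), (∀ s ∈ S, ‖s.1‖ = 1) ∧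
      (∀ x ∈ Q, 0 ≤ dS S hS x) ∧ {x | 0 ≤ dS S hS x} ⊆ Ω := by
  have h1 : ∀ y ∈ frontier Ω, ∃ s : E2 × ℝ, ‖s.1‖ = 1 ∧ (∀ a ∈ Q, 0 ≤ ell s a) ∧ ell s y < 0 := by
    intro y hy
    have hyQ : y ∉ Q := by
      rw [hΩo.frontier_eq] at hy
      exact fun h => hy.2 (hQΩ h)
    obtain ⟨g, u, hg, hgy⟩ := geometric_hahn_banach_closed_point hQ hQc.isClosed hyQ
    set w := (InnerProductSpace.toDual ℝ E2).symm g with hw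
    have hwg : ∀ x, inner ℝ w x = g x := fun x => by
      rw [hw, InnerProductSpace.toDual_symm_apply]
    have hw0 : w ≠ 0 := by
      intro h
      obtain ⟨a, ha⟩ := hQn
      have := hg a ha
      rw [← hwg, h, inner_zero_left] at this
      rw [← hwg, h, inner_zero_left] at hgy
      linarith
    have hwn : 0 < ‖w‖ := norm_pos_iff.mpr hw0
    have he : ∀ x, ell (-(‖w‖⁻¹ • w), -(‖w‖⁻¹ * u)) x = ‖w‖⁻¹ * (u - g x) := by
      intro x
      simp only [ell, inner_neg_left, inner_smul_left, hwg]
      simp; ring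
    refine ⟨(-(‖w‖⁻¹ • w), -(‖w‖⁻¹ * u)), ?_, ?_, ?_⟩
    · simp [norm_smul, hwn.ne']
    · intro a ha; rw [he]
      have := hg a ha
      exact mul_nonneg (by positivity) (by linarith)
    · rw [he]
      exact mul_neg_of_pos_of_neg (by positivity) (by linarith)
  choose! s hs1 hsQ hsy using h1
  have hcpt : IsCompact (frontier Ω) :=
    hΩb.isCompact_closure.of_isClosed_subset isClosed_frontier frontier_subset_closure
  obtain ⟨t, ht, htc⟩ := hcpt.elim_nhds_subcover (fun y => {x | ell (s y) x < 0})
    (fun y hy => (isOpen_lt (ell_cont _) continuous_const).mem_nhds (hsy y hy))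
  classical
  set S := t.image s with hSd
  have hP : {x | ∀ r ∈ S, 0 ≤ ell r x} ⊆ Ω := by
    have hconv : Convex ℝ {x | ∀ r ∈ S, 0 ≤ ell r x} := by
      intro x hx y hy a b ha hb hab r hr
      rw [ell_comb _ _ _ _ _ hab]
      exact add_nonneg (mul_nonneg ha (hx r hr)) (mul_nonneg hb (hy r hr))
    refine hconv.isPreconnected.subset_of_closure_inter_subset hΩo ?_ ?_
    · obtain ⟨a, ha⟩ := hQn
      refine ⟨a, ?_, hQΩ ha⟩
      intro r hr
      obtain ⟨y, hy, rfl⟩ := Finset.mem_image.mp hr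
      exact hsQ y (ht y hy) a ha
    · rintro x ⟨hx, hxP⟩
      by_contra hxΩ
      have hxf : x ∈ frontier Ω := by rw [hΩo.frontier_eq]; exact ⟨hx, hxΩ⟩
      obtain ⟨y, hy, hxy⟩ := mem_iUnion₂.mp (htc hxf)
      have := hxP (s y) (Finset.mem_image_of_mem s hy)
      simp only [mem_setOf_eq] at hxy
      linarith
  have hS : S.Nonempty := by
    by_contra h
    rw [Finset.not_nonempty_iff_eq_empty] at h
    rw [h] at hP
    simp only [Finset.notMem_empty, false_implies, implies_true, setOf_true] at hP
    exact NormedSpace.unbounded_univ ℝ E2 (hΩb.subset hP)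
  refine ⟨S, hS, ?_, ?_, ?_⟩
  · intro r hr
    obtain ⟨y, hy, rfl⟩ := Finset.mem_image.mp hr
    exact hs1 y (ht y hy)
  · intro x hx
    apply Finset.le_inf'
    intro r hr
    obtain ⟨y, hy, rfl⟩ := Finset.mem_image.mp hr
    exact hsQ y (ht y hy) x hx
  · intro x hx
    exact hP fun r hr => le_trans hx (dS_le S hS x hr)

noncomputable def GG (K ε t : ℝ) : ℝ :=
  (K / ε / 2) * (max t 0 ^ 2 - max (t - ε) 0 ^ 2) - (1 / 2) * max (t - ε) 0 ^ 2

theorem GG_cont (K ε : ℝ) : Continuous (GG K ε) := by unfold GG; fun_prop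

theorem GG_zero (K ε t : ℝ) (hε : 0 < ε) (ht : t ≤ 0) : GG K ε t = 0 := by
  unfold GG; rw [max_eq_right ht, max_eq_right (by linarith)]; ring

theorem GG_mid (K ε t : ℝ) (ht : 0 ≤ t) (ht' : t ≤ ε) : GG K ε t = (K / ε / 2) * t ^ 2 := by
  unfold GG; rw [max_eq_left ht, max_eq_right (by linarith)]; ring

theorem GG_top (K ε t : ℝ) (hε : 0 < ε) (ht' : ε ≤ t) :
    GG K ε t = K * t - K * ε / 2 - (t - ε) ^ 2 / 2 := by
  unfold GG; rw [max_eq_left (by linarith), max_eq_left (by linarith)]; field_simp; ring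

theorem GG_mono (K ε t u : ℝ) (hK : 0 < K) (hε : 0 < ε) (htu : t ≤ u) (hu : u ≤ K + ε) :
    GG K ε t ≤ GG K ε u := by
  have hm : MonotoneOn (GG K ε) (Iic (K + ε)) := by
    have h1 : MonotoneOn (GG K ε) (Iic 0) := fun x hx y hy _ => by
      rw [GG_zero K ε x hε hx, GG_zero K ε y hε hy]
    have h2 : MonotoneOn (GG K ε) (Icc 0 ε) := fun x hx y hy hxy => by
      rw [GG_mid K ε x hx.1 hx.2, GG_mid K ε y hy.1 hy.2]
      have := hx.1
      gcongr
    have h3 : MonotoneOn (GG K ε) (Icc ε (K + ε)) := fun x hx y hy hxy => by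
      rw [GG_top K ε x hε hx.1, GG_top K ε y hε hy.1]
      nlinarith [hx.1, hx.2, hy.1, hy.2, mul_nonneg (sub_nonneg.2 hxy) (sub_nonneg.2 hy.2), mul_nonneg (sub_nonneg.2 hxy) (sub_nonneg.2 hx.2)]
    have h12 := h1.union_right h2 isGreatest_Iic (isLeast_Icc hε.le)
    rw [Iic_union_Icc_eq_Iic hε.le] at h12
    have h123 := h12.union_right h3 isGreatest_Iic (isLeast_Icc (by linarith))
    rwa [Iic_union_Icc_eq_Iic (by linarith)] at h123
  exact hm (htu.trans hu) hu htu

theorem GG_nonneg (K ε t : ℝ) (hK : 0 < K) (hε : 0 < ε) (ht : t ≤ K + ε) : 0 ≤ GG K ε t := by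
  rcases le_total t 0 with h | h
  · rw [GG_zero K ε t hε h]
  · rw [← GG_zero K ε 0 hε le_rfl]; exact GG_mono K ε 0 t hK hε h ht

theorem pos_sq_le (t s : ℝ) : max (t + s) 0 ^ 2 + max (t - s) 0 ^ 2 - 2 * max t 0 ^ 2 ≤ 2 * s ^ 2 := by
  rcases le_total (t + s) 0 with h1 | h1 <;> rcases le_total (t - s) 0 with h2 | h2 <;>
    rcases le_total t 0 with h3 | h3 <;> simp only [max_eq_left, max_eq_right, h1, h2, h3] <;> nlinarith

theorem pos_sq_ge (t s : ℝ) : 0 ≤ max (t + s) 0 ^ 2 + max (t - s) 0 ^ 2 - 2 * max t 0 ^ 2 := by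
  rcases le_total (t + s) 0 with h1 | h1 <;> rcases le_total (t - s) 0 with h2 | h2 <;>
    rcases le_total t 0 with h3 | h3 <;> simp only [max_eq_left, max_eq_right, h1, h2, h3] <;> nlinarith [sq_nonneg s, sq_nonneg t, sq_nonneg (t+s), sq_nonneg (t-s)]

theorem GG_sd (K ε t s : ℝ) (hK : 0 < K) (hε : 0 < ε) :
    GG K ε (t + s) + GG K ε (t - s) - 2 * GG K ε t ≤ K / ε * s ^ 2 := by
  have h1 := pos_sq_le t s
  have h2 := pos_sq_ge (t - ε) s
  have e1 : t + s - ε = t - ε + s := by ring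
  have e2 : t - s - ε = t - ε - s := by ring
  unfold GG
  rw [e1, e2]
  have hp : 0 < K / ε := by positivity
  nlinarith

theorem GG_sd2 (K ε t s : ℝ) (hε : 0 < ε) (h : ε + |s| ≤ t) :
    GG K ε (t + s) + GG K ε (t - s) - 2 * GG K ε t = - s ^ 2 := by
  have h1 := le_abs_self s
  have h2 := neg_abs_le s
  rw [GG_top K ε t hε (by linarith [abs_nonneg s]), GG_top K ε _ hε (by linarith), GG_top K ε _ hε (by linarith)]
  ring

theorem GG_sd3 (K ε t s : ℝ) (hε : 0 < ε) (h : t ≤ -|s|) :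
    GG K ε (t + s) + GG K ε (t - s) - 2 * GG K ε t = 0 := by
  have h1 := le_abs_self s
  have h2 := neg_abs_le s
  rw [GG_zero K ε t hε (by linarith [abs_nonneg s]), GG_zero K ε _ hε (by linarith), GG_zero K ε _ hε (by linarith)]
  ring

theorem lap_le (ψ : E2 → ℝ) (hψ : ContDiff ℝ ∞ ψ) (x : E2) (C r : ℝ) (hr : 0 < r)
    (h : ∀ t : ℝ, |t| < r → ∑ i : Fin 2, (ψ (x + t • EuclideanSpace.single i (1:ℝ)) +
      ψ (x - t • EuclideanSpace.single i (1:ℝ)) - 2 * ψ x) ≤ C * t ^ 2) : laplacian ψ x ≤ C := by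
  by_contra! hlt
  obtain ⟨C', hC1, hC2⟩ := exists_between hlt
  have hφ1 : Differentiable ℝ ψ := hψ.differentiable (by simp)
  have hφ2 : Differentiable ℝ (fun y => fderiv ℝ ψ y) :=
    (hψ.fderiv_right (m := 1) (by norm_cast)).differentiable (by simp)
  have hφ2e : ∀ e, Differentiable ℝ (fun y => fderiv ℝ ψ y e) := fun e y =>
    (hφ2 y).clm_apply (differentiableAt_const e)
  have hline : ∀ (g : E2 → ℝ) (hg : Differentiable ℝ g) (e : E2) (t : ℝ),
      HasDerivAt (fun t : ℝ => g (x + t • e)) (fderiv ℝ g (x + t • e) e) t := by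
    intro g hg e t
    have h1 : HasDerivAt (fun t : ℝ => x + t • e) e t := by
      simpa using ((hasDerivAt_id t).smul_const e).const_add x
    exact (hg (x + t • e)).hasFDerivAt.comp_hasDerivAt t h1
  have hline' : ∀ (g : E2 → ℝ) (hg : Differentiable ℝ g) (e : E2) (t : ℝ),
      HasDerivAt (fun t : ℝ => g (x - t • e)) (- fderiv ℝ g (x - t • e) e) t := by
    intro g hg e t
    have h1 : HasDerivAt (fun t : ℝ => x - t • e) (-e) t := by
      simpa using ((hasDerivAt_id t).smul_const e).const_sub x
    have := (hg (x - t • e)).hasFDerivAt.comp_hasDerivAt t h1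
    rw [map_neg] at this
    exact this
  let e : Fin 2 → E2 := fun i => EuclideanSpace.single i (1:ℝ)
  let w : ℝ → ℝ := fun t => ∑ i : Fin 2, (ψ (x + t • e i) + ψ (x - t • e i) - 2 * ψ x) - C' * t ^ 2
  have hw1 : ∀ t, HasDerivAt w (∑ i : Fin 2, (fderiv ℝ ψ (x + t • e i) (e i) + - fderiv ℝ ψ (x - t • e i) (e i)) - C' * (2 * t)) t := by
    intro t
    have h1 : ∀ i : Fin 2, HasDerivAt (fun t => (ψ (x + t • e i) + ψ (x - t • e i) - 2 * ψ x))
      (fderiv ℝ ψ (x + t • e i) (e i) + - fderiv ℝ ψ (x - t • e i) (e i)) t := fun i =>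
      ((hline ψ hφ1 (e i) t).add (hline' ψ hφ1 (e i) t)).sub_const _
    have h2 := HasDerivAt.fun_sum (u := Finset.univ) fun i _ => h1 i
    have h3 : HasDerivAt (fun t : ℝ => C' * t ^ 2) (C' * (2 * t)) t := by
      simpa using (hasDerivAt_pow 2 t).const_mul C'
    exact h2.sub h3
  have hdw : deriv w = fun t => (∑ i : Fin 2, (fderiv ℝ ψ (x + t • e i) (e i) + - fderiv ℝ ψ (x - t • e i) (e i)) - C' * (2 * t)) :=
    funext fun t => (hw1 t).deriv
  have hw2 : HasDerivAt (deriv w) (2 * laplacian ψ x - C' * 2) 0 := by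
    rw [hdw]
    have h1 : ∀ i : Fin 2, HasDerivAt (fun t : ℝ => (fderiv ℝ ψ (x + t • e i) (e i) + - fderiv ℝ ψ (x - t • e i) (e i)))
      (fderiv ℝ (fun y => fderiv ℝ ψ y (e i)) (x + (0:ℝ) • e i) (e i) + - - fderiv ℝ (fun y => fderiv ℝ ψ y (e i)) (x - (0:ℝ) • e i) (e i)) 0 := fun i =>
      (hline _ (hφ2e (e i)) (e i) 0).add (hline' _ (hφ2e (e i)) (e i) 0).neg
    have h2 := HasDerivAt.fun_sum (u := Finset.univ) fun i _ => h1 i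
    have h3 : HasDerivAt (fun t : ℝ => C' * (2 * t)) (C' * 2) 0 := by
      simpa using ((hasDerivAt_id (0:ℝ)).const_mul 2).const_mul C'
    refine (h2.sub h3).congr_deriv ?_
    simp only [laplacian, Fin.sum_univ_two, zero_smul, add_zero, sub_zero, neg_neg, e]; ring
  have hmin : IsLocalMin w 0 := by
    apply isLocalMin_of_deriv_deriv_pos
    · rw [hw2.deriv]; linarith
    · rw [hdw]; simp
    · exact (hw1 0).continuousAt
  have h0 : w 0 = 0 := by simp [w]; ring
  obtain ⟨r', hr', hball⟩ := Metric.eventually_nhds_iff.mp hmin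
  set t := min r r' / 2 with ht
  have htp : 0 < t := by positivity
  have htr : t < r := by
    have := min_le_left r r'; linarith
  have htr' : t < r' := by
    have := min_le_right r r'; linarith
  have h1 := hball (y := t) (by simpa [abs_of_pos htp] using htr')
  have h2 := h t (by rwa [abs_of_pos htp])
  rw [h0] at h1
  simp only [w, e] at h1
  nlinarith [sq_pos_of_pos htp]


theorem moll (φ : E2 → ℝ) (hφ : Continuous φ) (δ : ℝ) (hδ : 0 < δ) : ∃ ψ : E2 → ℝ,
    ContDiff ℝ ∞ ψ ∧ (∀ x C, (∀ z ∈ Metric.ball x δ, ∀ t : ℝ, |t| < δ →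
      ∑ i : Fin 2, (φ (z + t • EuclideanSpace.single i (1:ℝ)) +
      φ (z - t • EuclideanSpace.single i (1:ℝ)) - 2 * φ z) ≤ C * t ^ 2) → laplacian ψ x ≤ C) ∧
    ((∀ x, 0 ≤ φ x) → ∀ x, 0 ≤ ψ x) ∧ (∀ x, (∀ z ∈ Metric.ball x δ, φ z = 0) → ψ x = 0) := by
  let b : ContDiffBump (0 : E2) := ⟨δ / 2, δ, by positivity, by linarith⟩
  let η : E2 → ℝ := b.normed volume
  have hηc : HasCompactSupport η := b.hasCompactSupport_normed
  have hηs : ∀ y, y ∉ Metric.ball (0 : E2) δ → η y = 0 := by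
    intro y hy
    have := b.support_normed_eq (μ := volume)
    by_contra h
    have h2 : y ∈ Function.support (b.normed volume) := h
    rw [this] at h2
    exact hy h2
  have hη0 : ∀ y, 0 ≤ η y := fun y => b.nonneg_normed y
  have hη1 : ∫ y, η y = 1 := b.integral_normed
  have hηcd : ContDiff ℝ ∞ η := b.contDiff_normed
  let ψ : E2 → ℝ := convolution η φ (ContinuousLinearMap.lsmul ℝ ℝ) volume
  have hψ : ∀ x, ψ x = ∫ y, η y * φ (x - y) := fun x => rfl
  have hint : ∀ x, Integrable (fun y => η y * φ (x - y)) := by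
    intro x
    apply Continuous.integrable_of_hasCompactSupport
    · exact hηcd.continuous.mul (hφ.comp (continuous_const.sub continuous_id))
    · exact hηc.mul_right
  have hηi : Integrable η := hηcd.continuous.integrable_of_hasCompactSupport hηc
  have hcd : ContDiff ℝ ∞ ψ := by
    apply hηc.contDiff_convolution_left _ hηcd hφ.locallyIntegrable
  refine ⟨ψ, hcd, ?_, ?_, ?_⟩
  · intro x C h
    refine lap_le ψ hcd x C δ hδ ?_
    intro t ht
    simp only [hψ, Fin.sum_univ_two]
    set e : Fin 2 → E2 := fun i => EuclideanSpace.single i (1:ℝ) with he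
    change (∫ y, η y * φ (x + t • e 0 - y)) + (∫ y, η y * φ (x - t • e 0 - y)) - 2 * (∫ y, η y * φ (x - y)) + ((∫ y, η y * φ (x + t • e 1 - y)) + (∫ y, η y * φ (x - t • e 1 - y)) - 2 * (∫ y, η y * φ (x - y))) ≤ C * t ^ 2
    have i1 := hint (x + t • e 0)
    have i2 := hint (x - t • e 0)
    have i3 := hint x
    have i4 := hint (x + t • e 1)
    have i5 := hint (x - t • e 1)
    have e1 := integral_add (i1.add i2) ((i3.const_mul (-4)).add (i4.add i5))
    have e2 := integral_add i1 i2
    have e3 := integral_add (i3.const_mul (-4)) (i4.add i5)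
    have e4 := integral_add i4 i5
    have e5 := integral_const_mul (-4) (fun y => η y * φ (x - y)) (μ := volume)
    have e6 := integral_mul_const (C * t ^ 2) η (μ := volume)
    have hle := integral_mono ((i1.add i2).add ((i3.const_mul (-4)).add (i4.add i5))) (hηi.mul_const (C * t ^ 2)) (by
      intro y
      simp only [Pi.add_apply]
      by_cases hy : y ∈ Metric.ball (0:E2) δ
      · have h1 := h (x - y) (by simpa [dist_eq_norm] using hy) t ht
        have h2 := hη0 y
        simp only [Fin.sum_univ_two] at h1
        change (φ (x - y + t • e 0) + φ (x - y - t • e 0) - 2 * φ (x - y)) + (φ (x - y + t • e 1) + φ (x - y - t • e 1) - 2 * φ (x - y)) ≤ _ at h1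
        rw [show x - y + t • e 0 = x + t • e 0 - y by abel, show x - y + t • e 1 = x + t • e 1 - y by abel, show x - y - t • e 0 = x - t • e 0 - y by abel, show x - y - t • e 1 = x - t • e 1 - y by abel] at h1
        nlinarith [mul_le_mul_of_nonneg_left h1 h2]
      · rw [hηs y hy]; simp)
    simp only [Pi.add_apply] at e1 e2 e3 e4 hle
    rw [hη1] at e6
    linarith
  · intro h x
    rw [hψ]
    exact integral_nonneg fun y => mul_nonneg (hη0 y) (h _)
  · intro x h
    rw [hψ]
    have : (fun y => η y * φ (x - y)) = fun _ => 0 := by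
      funext y
      by_cases hy : y ∈ Metric.ball (0:E2) δ
      · rw [h (x - y) (by simpa [dist_eq_norm] using hy), mul_zero]
      · rw [hηs y hy, zero_mul]
    rw [this]; simp

theorem L2 (Ω : Set E2) (hΩo : IsOpen Ω) (f : E2 → ℝ)
    (hf1 : ∀ x ∈ Ω, DifferentiableAt ℝ f x)
    (hf2 : ∀ x ∈ Ω, DifferentiableAt ℝ (fun y => fderiv ℝ f y) x)
    (hsub : ∀ x ∈ Ω, 0 ≤ laplacian f x) (hf0 : ∀ x ∈ Ω, 0 ≤ f x)
    (S : Finset (E2 × ℝ)) (hS : S.Nonempty) (hu : ∀ s ∈ S, ‖s.1‖ = 1)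
    (hP : {x | 0 ≤ dS S hS x} ⊆ Ω) (hPc : IsCompact {x | 0 ≤ dS S hS x})
    (K ε δ : ℝ) (hK : 0 < K) (hε : 0 < ε) (hδ : 0 < δ) (hKd : ∀ x, dS S hS x < K) :
    ∫ x in {x | ε + 4 * δ < dS S hS x}, f x ≤
      K / ε * ∫ x in {x | 0 < dS S hS x ∧ dS S hS x ≤ ε + 4 * δ}, f x := by
  have hdc := dS_cont S hS
  have hlip := dS_lip S hS hu
  have hsd : ∀ (m : ℝ) (x : E2), (∀ s, |s| < δ → GG K ε (dS S hS x - 2 * δ + s) + GG K ε (dS S hS x - 2 * δ - s) - 2 * GG K ε (dS S hS x - 2 * δ) ≤ m * s ^ 2) →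
      ∀ t : ℝ, |t| < δ →
      ∑ i : Fin 2, (GG K ε (dS S hS (x + t • EuclideanSpace.single i (1:ℝ)) - 2 * δ) +
      GG K ε (dS S hS (x - t • EuclideanSpace.single i (1:ℝ)) - 2 * δ) - 2 * GG K ε (dS S hS x - 2 * δ)) ≤ m * t ^ 2 := by
    intro m x hm t ht
    obtain ⟨s, hs, hsx⟩ := dS_ex S hS x
    have hn : s.1 0 ^ 2 + s.1 1 ^ 2 = 1 := by
      have := EuclideanSpace.real_norm_sq_eq s.1
      rw [hu s hs, Fin.sum_univ_two] at this
      linarith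
    have hni : ∀ i : Fin 2, |s.1 i| ≤ 1 := by
      intro i
      rw [abs_le_one_iff_mul_self_le_one]
      fin_cases i <;> simp <;> nlinarith [sq_nonneg (s.1 0), sq_nonneg (s.1 1)]
    have key : ∀ i : Fin 2, (GG K ε (dS S hS (x + t • EuclideanSpace.single i (1:ℝ)) - 2 * δ) +
      GG K ε (dS S hS (x - t • EuclideanSpace.single i (1:ℝ)) - 2 * δ) - 2 * GG K ε (dS S hS x - 2 * δ)) ≤ m * (t * s.1 i) ^ 2 := by
      intro i
      have hlt : |t * s.1 i| < δ := by
        rw [abs_mul]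
        calc |t| * |s.1 i| ≤ |t| * 1 := by gcongr; exact hni i
          _ < δ := by linarith
      have hin : inner ℝ s.1 (t • EuclideanSpace.single i (1:ℝ)) = t * s.1 i := by
        rw [inner_smul_right, EuclideanSpace.inner_single_right]; simp
      have h1 := dS_le S hS (x + t • EuclideanSpace.single i (1:ℝ)) hs
      have h2 := dS_le S hS (x + -(t • EuclideanSpace.single i (1:ℝ))) hs
      rw [ell_add, hin, ← hsx] at h1
      rw [ell_add, inner_neg_right, hin, ← hsx, ← sub_eq_add_neg] at h2
      have hx := hKd x
      obtain ⟨ha, hb⟩ := abs_lt.mp hlt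
      have h3 := GG_mono K ε (dS S hS (x + t • EuclideanSpace.single i (1:ℝ)) - 2 * δ) (dS S hS x - 2 * δ + t * s.1 i) hK hε (by linarith) (by linarith)
      have h4 := GG_mono K ε (dS S hS (x - t • EuclideanSpace.single i (1:ℝ)) - 2 * δ) (dS S hS x - 2 * δ - t * s.1 i) hK hε (by linarith) (by linarith)
      have := hm _ hlt
      linarith
    rw [Fin.sum_univ_two]
    have k0 := key 0
    have k1 := key 1
    have : m * t ^ 2 = m * (t * s.1 0) ^ 2 + m * (t * s.1 1) ^ 2 := by
      linear_combination (- m * t ^ 2) * hn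
    linarith
  obtain ⟨ψ, hψs, hψl, hψ0, hψz⟩ := moll (fun x => GG K ε (dS S hS x - 2 * δ))
    ((GG_cont K ε).comp (hdc.sub continuous_const)) δ hδ
  have hb : ∀ x z, z ∈ Metric.ball x δ → dS S hS z < dS S hS x + δ ∧ dS S hS x - δ < dS S hS z := by
    intro x z hz
    rw [mem_ball_iff_norm] at hz
    have h1 := hlip z x
    have h2 := hlip x z
    rw [norm_sub_rev] at h2
    constructor <;> linarith
  have hψ0' := hψ0 fun x => GG_nonneg K ε _ hK hε (by linarith [hKd x])
  have hz : ∀ x, dS S hS x < δ → ψ x = 0 := by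
    intro x hx
    apply hψz
    intro z hz
    exact GG_zero K ε _ hε (by linarith [(hb x z hz).1])
  have hts : tsupport ψ ⊆ {x | δ ≤ dS S hS x} := by
    apply closure_minimal
    · intro x hx
      by_contra h
      exact hx (hz x (not_le.mp h))
    · exact isClosed_le continuous_const hdc
  have htP : tsupport ψ ⊆ {x | 0 ≤ dS S hS x} := fun x hx => le_trans hδ.le (hts hx)
  have hcs : HasCompactSupport ψ := hPc.of_isClosed_subset (isClosed_tsupport ψ) htP
  have hw := weak_lap Ω hΩo f ψ hf1 hf2 hsub hψs hcs (htP.trans hP) hψ0'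
  have hl1 : ∀ x, ε + 4 * δ < dS S hS x → laplacian ψ x ≤ -1 := by
    intro x hx
    apply hψl
    intro z hz
    apply hsd
    intro s hs
    rw [GG_sd2 K ε _ s hε (by linarith [(hb x z hz).2])]
    linarith
  have hl2 : ∀ x, laplacian ψ x ≤ K / ε := by
    intro x
    apply hψl
    intro z hz
    apply hsd
    intro s hs
    exact GG_sd K ε _ s hK hε
  have hl3 : ∀ x, dS S hS x ≤ 0 → laplacian ψ x = 0 := by
    intro x hx
    have : x ∉ tsupport ψ := fun h => by have := hts h; simp only [mem_setOf_eq] at this; linarith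
    unfold laplacian
    exact Finset.sum_eq_zero fun i _ => lap_zero ψ _ x this
  have hfc : ContinuousOn f Ω := fun x hx => (hf1 x hx).continuousAt.continuousWithinAt
  have hfi : IntegrableOn f {x | 0 ≤ dS S hS x} := (hfc.mono hP).integrableOn_compact hPc
  set A := {x | ε + 4 * δ < dS S hS x} with hA
  set B := {x | 0 < dS S hS x ∧ dS S hS x ≤ ε + 4 * δ} with hB
  have hAm : MeasurableSet A := (isOpen_lt continuous_const hdc).measurableSet
  have hBm : MeasurableSet B := (isOpen_lt continuous_const hdc).measurableSet.inter (isClosed_le hdc continuous_const).measurableSet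
  have hAP : A ⊆ {x | 0 ≤ dS S hS x} := fun x hx => by simp only [hA, mem_setOf_eq] at hx ⊢; linarith
  have hBP : B ⊆ {x | 0 ≤ dS S hS x} := fun x hx => hx.1.le
  have hfA := hfi.mono_set hAP
  have hfB := hfi.mono_set hBP
  have hiA : Integrable (A.indicator f) := hfA.integrable_indicator hAm
  have hiB : Integrable (B.indicator f) := hfB.integrable_indicator hBm
  have hle : ∫ x, f x * laplacian ψ x ≤ ∫ x, (K / ε * B.indicator f x - A.indicator f x) := by
    have hlz : ∀ x ∉ tsupport ψ, laplacian ψ x = 0 := fun x hx => by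
      unfold laplacian
      exact Finset.sum_eq_zero fun i _ => lap_zero ψ _ x hx
    have hlc : Continuous (laplacian ψ) := by
      unfold laplacian
      exact continuous_finset_sum _ fun i _ => lap_cont ψ hψs _
    have hcc : Continuous (fun x => f x * laplacian ψ x) :=
      cont_mul_of_supp Ω hΩo f _ (tsupport ψ) (isClosed_tsupport ψ) (htP.trans hP) hfc hlc hlz
    have hci : Integrable (fun x => f x * laplacian ψ x) := by
      apply hcc.integrable_of_hasCompactSupport
      refine HasCompactSupport.intro hcs ?_
      intro x hx
      rw [hlz x hx, mul_zero]
    refine integral_mono hci ((hiB.const_mul _).sub hiA) ?_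
    intro x
    simp only [Pi.sub_apply]
    by_cases h0 : dS S hS x ≤ 0
    · have hxA : x ∉ A := fun h => by simp only [hA, mem_setOf_eq] at h; linarith
      have hxB : x ∉ B := fun h => by linarith [h.1]
      simp [hxA, hxB, hl3 x h0]
    · push Not at h0
      have hfx := hf0 x (hP h0.le)
      by_cases h1 : ε + 4 * δ < dS S hS x
      · have hxA : x ∈ A := h1
        have hxB : x ∉ B := fun h => by linarith [h.2]
        simp only [indicator_of_mem hxA, indicator_of_notMem hxB]
        nlinarith [hl1 x h1]
      · have hxA : x ∉ A := h1
        have hxB : x ∈ B := ⟨h0, not_lt.mp h1⟩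
        simp only [indicator_of_mem hxB, indicator_of_notMem hxA]
        nlinarith [hl2 x]
  rw [integral_sub (hiB.const_mul _) hiA, integral_const_mul, integral_indicator hAm, integral_indicator hBm] at hle
  linarith

theorem rot (m n : E2) (hm : ‖m‖ = 1) (hn : ‖n‖ = 1) (hmn : inner ℝ m n = 0) :
    ∃ Φ : E2 ≃ᵐ ℝ × ℝ, MeasurePreserving Φ volume volume ∧ ∀ x, Φ x = (inner ℝ m x, inner ℝ n x) := by
  have ho : Orthonormal ℝ (![m, n] : Fin 2 → E2) := by
    rw [orthonormal_vecCons_iff]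
    refine ⟨hm, by simpa using hmn, by simpa [orthonormal_subsingleton_iff] using hn⟩
  have hsp : (⊤ : Submodule ℝ E2) ≤ Submodule.span ℝ (Set.range ![m, n]) := by
    rw [ho.linearIndependent.span_eq_top_of_card_eq_finrank (by simp)]
  let b : OrthonormalBasis (Fin 2) ℝ E2 := OrthonormalBasis.mk ho hsp
  have hb : ⇑b = ![m, n] := OrthonormalBasis.coe_mk ho hsp
  refine ⟨(b.measurableEquiv.trans (MeasurableEquiv.toLp 2 (Fin 2 → ℝ)).symm).trans MeasurableEquiv.finTwoArrow, ?_, ?_⟩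
  · exact (volume_preserving_finTwoArrow ℝ).comp ((EuclideanSpace.volume_preserving_symm_measurableEquiv_toLp (Fin 2)).comp b.measurePreserving_measurableEquiv)
  · intro x
    have h0 : b.repr x 0 = inner ℝ m x := by rw [b.repr_apply_apply, hb]; rfl
    have h1 : b.repr x 1 = inner ℝ n x := by rw [b.repr_apply_apply, hb]; rfl
    rw [← h0, ← h1]
    rfl

theorem coarea (m n : E2) (hm : ‖m‖ = 1) (hn : ‖n‖ = 1) (hmn : inner ℝ m n = 0) (b ε : ℝ)
    (R A : Set E2) (hR : MeasurableSet R) (hA : MeasurableSet A)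
    (hRb : ∀ x ∈ R, b < inner ℝ n x ∧ inner ℝ n x ≤ b + ε)
    (G : E2 → ℝ≥0∞) (hG : Measurable G) (w : ℝ≥0∞)
    (hex : ∀ x ∈ R, ∃ p ∈ A, inner ℝ m p = inner ℝ m x)
    (hGle : ∀ x ∈ R, ∀ p ∈ A, inner ℝ m p = inner ℝ m x → G x ≤ G p + w) :
    ∫⁻ x in R, G x ≤ ENNReal.ofReal ε * ∫⁻ p in A, (G p + w) ∂μH[1] := by
  obtain ⟨Φ, hΦ, hΦx⟩ := rot m n hm hn hmn
  let h : ℝ → ℝ≥0∞ := fun t => ⨆ u : ℝ, R.indicator G (Φ.symm (t, u))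
  have hΦs : ∀ t u, inner ℝ m (Φ.symm (t, u)) = t ∧ inner ℝ n (Φ.symm (t, u)) = u := by
    intro t u
    have := hΦx (Φ.symm (t, u))
    rw [Φ.apply_symm_apply] at this
    rw [Prod.mk.injEq] at this
    exact ⟨this.1.symm, this.2.symm⟩
  have hGR : Measurable (R.indicator G) := hG.indicator hR
  have e1 : ∫⁻ x in R, G x = ∫⁻ t : ℝ, ∫⁻ u : ℝ, R.indicator G (Φ.symm (t, u)) := by
    rw [← lintegral_indicator hR, ← (hΦ.symm Φ).lintegral_comp hGR, Measure.volume_eq_prod]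
    exact lintegral_prod _ (hGR.comp Φ.symm.measurable).aemeasurable
  have e2 : ∀ t, ∫⁻ u : ℝ, R.indicator G (Φ.symm (t, u)) ≤ ENNReal.ofReal ε * h t := by
    intro t
    calc ∫⁻ u : ℝ, R.indicator G (Φ.symm (t, u)) ≤ ∫⁻ u : ℝ, (Ioc b (b + ε)).indicator (fun _ => h t) u := by
          apply lintegral_mono
          intro u
          by_cases hu : u ∈ Ioc b (b + ε)
          · rw [indicator_of_mem hu]
            exact le_iSup (fun u : ℝ => R.indicator G (Φ.symm (t, u))) u
          · have : Φ.symm (t, u) ∉ R := fun hh => by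
              have := hRb _ hh
              rw [(hΦs t u).2] at this
              exact hu this
            simp [this]
      _ = ENNReal.ofReal ε * h t := by
          rw [lintegral_indicator_const measurableSet_Ioc, Real.volume_Ioc, mul_comm]
          congr 2; ring
  have e3 : ∫⁻ t, h t ≤ ∫⁻ p in A, (G p + w) ∂μH[1] := by
    obtain ⟨g, hgm, hgh, hge⟩ := exists_measurable_le_lintegral_eq volume h
    rw [hge]
    have hτm : Measurable (fun p : E2 => inner ℝ m p) := by fun_prop
    set D := {t | g t ≠ 0} with hD
    have hDm : MeasurableSet D := (hgm (measurableSet_singleton 0)).compl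
    have hhD : ∀ t ∈ D, ∃ x ∈ R, inner ℝ m x = t := by
      intro t ht
      by_contra! hno
      apply ht
      have : h t = 0 := by
        simp only [h, ENNReal.iSup_eq_zero]
        intro u
        apply indicator_of_notMem
        intro hh
        exact hno _ hh (hΦs t u).1
      exact le_antisymm (this ▸ hgh t) bot_le
    have hlipτ : LipschitzWith 1 (fun p : E2 => inner ℝ m p) := by
      apply LipschitzWith.of_dist_le_mul
      intro x y
      rw [Real.dist_eq, ← inner_sub_right, dist_eq_norm, NNReal.coe_one]
      have := abs_real_inner_le_norm m (x - y)
      rwa [hm] at this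
    have hmeas : volume.restrict D ≤ Measure.map (fun p : E2 => inner ℝ m p) (μH[1].restrict A) := by
      rw [Measure.le_iff]
      intro B hB
      rw [Measure.restrict_apply hB, Measure.map_apply hτm hB, Measure.restrict_apply (hτm hB)]
      calc volume (B ∩ D) ≤ volume ((fun p : E2 => inner ℝ m p) '' ((fun p : E2 => inner ℝ m p) ⁻¹' B ∩ A)) := by
            apply measure_mono
            rintro t ⟨htB, htD⟩
            obtain ⟨x, hx, hxt⟩ := hhD t htD
            obtain ⟨p, hp, hpx⟩ := hex x hx
            refine ⟨p, ⟨?_, hp⟩, hpx.trans hxt⟩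
            simp only [mem_preimage, hpx, hxt, htB]
        _ ≤ _ := by
            rw [← hausdorffMeasure_real]
            have := hlipτ.hausdorffMeasure_image_le (d := 1) zero_le_one ((fun p : E2 => inner ℝ m p) ⁻¹' B ∩ A)
            simpa using this
    calc ∫⁻ t, g t = ∫⁻ t in D, g t := by
          rw [← lintegral_indicator hDm]
          congr 1
          funext t
          by_cases ht : t ∈ D
          · simp [ht]
          · simp only [indicator_of_notMem ht]
            simpa [hD] using ht
      _ ≤ ∫⁻ t, g t ∂(Measure.map (fun p : E2 => inner ℝ m p) (μH[1].restrict A)) := lintegral_mono' hmeas le_rfl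
      _ = ∫⁻ p in A, g (inner ℝ m p) ∂μH[1] := lintegral_map hgm hτm
      _ ≤ ∫⁻ p in A, (G p + w) ∂μH[1] := by
          apply setLIntegral_mono' hA
          intro p hp
          refine (hgh _).trans ?_
          refine iSup_le fun u => ?_
          by_cases hx : Φ.symm (inner ℝ m p, u) ∈ R
          · rw [indicator_of_mem hx]
            exact hGle _ hx p hp (hΦs _ u).1.symm
          · simp [hx]
  rw [e1]
  calc _ ≤ ∫⁻ t, ENNReal.ofReal ε * h t := lintegral_mono e2
    _ = ENNReal.ofReal ε * ∫⁻ t, h t := lintegral_const_mul' _ _ ENNReal.ofReal_ne_top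
    _ ≤ _ := by gcongr

theorem perp_ex (n : E2) (hn : ‖n‖ = 1) : ∃ m : E2, ‖m‖ = 1 ∧ inner ℝ m n = 0 ∧
    ∀ x p : E2, inner ℝ m p = inner ℝ m x → ∃ c : ℝ, p = x - c • n := by
  have hn2 : n 0 ^ 2 + n 1 ^ 2 = 1 := by
    have := EuclideanSpace.real_norm_sq_eq n
    rw [hn, Fin.sum_univ_two] at this
    linarith
  refine ⟨!₂[-n 1, n 0], ?_, ?_, ?_⟩
  · have := EuclideanSpace.real_norm_sq_eq !₂[-n 1, n 0]
    simp only [Fin.sum_univ_two] at this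
    have h2 : ‖!₂[-n 1, n 0]‖ ^ 2 = 1 := by rw [this]; simp; linarith
    exact (sq_eq_sq₀ (norm_nonneg _) zero_le_one).mp (by rw [h2]; norm_num)
  · simp [PiLp.inner_apply, Fin.sum_univ_two]; ring
  · intro x p h
    simp only [PiLp.inner_apply, Fin.sum_univ_two] at h
    simp at h
    refine ⟨n 0 * (x 0 - p 0) + n 1 * (x 1 - p 1), ?_⟩
    ext i
    fin_cases i
    · simp
      linear_combination (x 0 - p 0) * hn2 - n 1 * h
    · simp
      linear_combination (x 1 - p 1) * hn2 + n 0 * h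

def As (Ω : Set E2) (S : Finset (E2 × ℝ)) (s : E2 × ℝ) : Set E2 :=
  frontier Ω ∩ {p | ell s p ≤ 0} ∩ ⋂ k ∈ S, {p | k ≠ s → 0 < ell k (p + (- ell s p) • s.1)}

theorem As_meas (Ω : Set E2) (S : Finset (E2 × ℝ)) (s : E2 × ℝ) : MeasurableSet (As Ω S s) := by
  refine (isClosed_frontier.measurableSet.inter (isClosed_le (ell_cont s) continuous_const).measurableSet).inter ?_
  refine Finset.measurableSet_biInter S fun k _ => ?_
  by_cases h : k = s
  · simp [h]
  · simp only [ne_eq, h, not_false_eq_true, true_imp_iff]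
    have := ell_cont k
    have := ell_cont s
    exact (isOpen_lt continuous_const (by fun_prop)).measurableSet

theorem As_disj (Ω : Set E2) (S : Finset (E2 × ℝ)) (hu : ∀ s ∈ S, ‖s.1‖ = 1) :
    Set.PairwiseDisjoint (S : Set (E2 × ℝ)) (As Ω S) := by
  intro s hs k hk hsk
  rw [Function.onFun, Set.disjoint_left]
  rintro p ⟨⟨_, h1⟩, h2⟩ ⟨⟨_, h3⟩, h4⟩
  have h5 := mem_iInter₂.mp h2 k hk hsk.symm
  have h6 := mem_iInter₂.mp h4 s hs hsk
  simp only [mem_setOf_eq] at h1 h3 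
  rw [ell_add, inner_smul_right] at h5 h6
  have h7 := real_inner_le_norm s.1 k.1
  rw [hu s hs, hu k hk] at h7
  rw [real_inner_comm] at h5
  nlinarith

theorem foot (S : Finset (E2 × ℝ)) (hS : S.Nonempty) (hu : ∀ s ∈ S, ‖s.1‖ = 1) (x : E2)
    (s : E2 × ℝ) (hs : s ∈ S) (h0 : 0 < dS S hS x) (hx : dS S hS x = ell s x) (k : E2 × ℝ) (hk : k ∈ S)
    (hks : k ≠ s) : 0 < ell k (x + (- ell s x) • s.1) := by
  rw [ell_add, inner_smul_right]
  have h1 := dS_le S hS x hk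
  rw [hx] at h1 h0
  by_cases h : k.1 = s.1
  · have h2 : inner ℝ k.1 s.1 = 1 := by rw [h, real_inner_self_eq_norm_sq, hu s hs]; norm_num
    rw [h2]
    have h3 : ell k x ≠ ell s x := by
      intro h4
      simp only [ell, h] at h4
      exact hks (Prod.ext h (by linarith))
    have := lt_of_le_of_ne h1 h3.symm
    linarith
  · have h2 := (inner_lt_one_iff_real_of_norm_eq_one (hu k hk) (hu s hs)).mpr h
    nlinarith

theorem front_ex (Ω t : Set E2) (hΩo : IsOpen Ω) (ht : IsPreconnected t) (h1 : (t ∩ Ω).Nonempty)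
    (h2 : (t ∩ Ωᶜ).Nonempty) : (t ∩ frontier Ω).Nonempty := by
  by_contra hno
  obtain ⟨x, hx, hxΩ⟩ := h2
  refine hxΩ (ht.subset_of_closure_inter_subset hΩo h1 ?_ hx)
  rintro y ⟨hy, hyt⟩
  by_contra hyΩ
  exact hno ⟨y, hyt, by rw [hΩo.frontier_eq]; exact ⟨hy, hyΩ⟩⟩

theorem L3 (Ω : Set E2) (hΩo : IsOpen Ω) (hΩb : Bornology.IsBounded Ω)
    (S : Finset (E2 × ℝ)) (hS : S.Nonempty) (hu : ∀ s ∈ S, ‖s.1‖ = 1)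
    (hP : {x | 0 ≤ dS S hS x} ⊆ Ω) (ε : ℝ)
    (G : E2 → ℝ≥0∞) (hG : Measurable G) (w : ℝ≥0∞)
    (hGle : ∀ s ∈ S, ∀ x p, 0 < dS S hS x → dS S hS x ≤ ε → dS S hS x = ell s x → p ∈ frontier Ω →
      ell s p ≤ 0 → (∃ c : ℝ, p = x - c • s.1) → G x ≤ G p + w) :
    ∫⁻ x in {x | 0 < dS S hS x ∧ dS S hS x ≤ ε}, G x ≤
      ENNReal.ofReal ε * ∫⁻ p in frontier Ω, (G p + w) ∂μH[1] := by
  have hdc := dS_cont S hS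
  let R : E2 × ℝ → Set E2 := fun s => {x | 0 < dS S hS x ∧ dS S hS x ≤ ε} ∩ {x | dS S hS x = ell s x}
  have hRm : ∀ s, MeasurableSet (R s) := fun s =>
    ((isOpen_lt continuous_const hdc).measurableSet.inter
      (isClosed_le hdc continuous_const).measurableSet).inter (isClosed_eq hdc (ell_cont s)).measurableSet
  have hsub : {x | 0 < dS S hS x ∧ dS S hS x ≤ ε} ⊆ ⋃ s ∈ S, R s := by
    intro x hx
    obtain ⟨s, hs, h⟩ := dS_ex S hS x
    exact mem_iUnion₂.mpr ⟨s, hs, hx, h⟩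
  have hside : ∀ s ∈ S, ∫⁻ x in R s, G x ≤ ENNReal.ofReal ε * ∫⁻ p in As Ω S s, (G p + w) ∂μH[1] := by
    intro s hs
    obtain ⟨m, hm, hmn, hc⟩ := perp_ex s.1 (hu s hs)
    refine coarea m s.1 hm (hu s hs) hmn s.2 ε (R s) (As Ω S s) (hRm s) (As_meas Ω S s) ?_ G hG w ?_ ?_
    · rintro x ⟨⟨h1, h2⟩, h3⟩
      have h3 : dS S hS x = ell s x := h3
      rw [h3, ell] at h1 h2
      constructor <;> linarith
    · rintro x ⟨⟨h1, h2⟩, h3⟩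
      have h3 : dS S hS x = ell s x := h3
      set y := x + (- ell s x) • s.1 with hy
      have hfoot := foot S hS hu x s hs h1 h3
      have hsy : ∀ c : ℝ, ell s (y + (-c) • s.1) = - c := by
        intro c
        rw [hy, ell_add, ell_add, inner_smul_right, inner_smul_right, real_inner_self_eq_norm_sq, hu s hs]
        ring
      have hyΩ : y ∈ Ω := by
        apply hP
        change 0 ≤ dS S hS y
        apply Finset.le_inf'
        intro k hk
        by_cases hks : k = s
        · have := hsy 0
          rw [neg_zero, zero_smul, add_zero] at this
          rw [hks, this]
        · exact (hfoot k hk hks).le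
      have hcon : IsPreconnected ((fun c : ℝ => y + (-c) • s.1) '' Ici 0) :=
        isPreconnected_Ici.image _ (by fun_prop)
      obtain ⟨p, ⟨c, hc0, rfl⟩, hpf⟩ := front_ex Ω _ hΩo hcon ⟨y, ⟨0, by simp, by simp⟩, hyΩ⟩ (by
        obtain ⟨M, hM⟩ := hΩb.exists_norm_le
        have hM0 : 0 ≤ M := (norm_nonneg y).trans (hM y hyΩ)
        refine ⟨_, ⟨2 * M + 1, by simp only [mem_Ici]; linarith, rfl⟩, ?_⟩
        intro hmem
        have h5 := hM _ hmem
        have h6 := norm_sub_norm_le ((-(2 * M + 1)) • s.1) (-y)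
        rw [norm_smul, hu s hs, norm_neg, norm_neg, sub_neg_eq_add, add_comm _ y, Real.norm_eq_abs, abs_of_pos (by linarith)] at h6
        linarith [hM y hyΩ])
      refine ⟨_, ⟨⟨hpf, ?_⟩, ?_⟩, ?_⟩
      · simp only [mem_setOf_eq, hsy]
        simpa using hc0
      · refine mem_iInter₂.mpr fun k hk hks => ?_
        rw [hsy, add_assoc, ← add_smul, neg_neg, neg_add_cancel, zero_smul, add_zero]
        exact hfoot k hk hks
      · rw [hy]
        simp only [inner_add_right, inner_smul_right, hmn]
        ring
    · rintro x ⟨⟨h1, h2⟩, h3⟩ p ⟨⟨h4, h5⟩, h6⟩ hmp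
      exact hGle s hs x p h1 h2 h3 h4 h5 (hc x p hmp)
  calc ∫⁻ x in {x | 0 < dS S hS x ∧ dS S hS x ≤ ε}, G x ≤ ∫⁻ x in ⋃ s ∈ S, R s, G x := lintegral_mono_set hsub
    _ ≤ ∑ s ∈ S, ∫⁻ x in R s, G x := by
        rw [← lintegral_finsetSum_measure]
        refine lintegral_mono' ?_ le_rfl
        rw [Measure.le_iff]
        intro B hB
        rw [Measure.restrict_apply hB, Measure.finsetSum_apply, inter_iUnion₂]
        simp only [Measure.restrict_apply hB]
        exact measure_biUnion_finset_le S _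
    _ ≤ ∑ s ∈ S, ENNReal.ofReal ε * ∫⁻ p in As Ω S s, (G p + w) ∂μH[1] := Finset.sum_le_sum hside
    _ = ENNReal.ofReal ε * ∫⁻ p in ⋃ s ∈ S, As Ω S s, (G p + w) ∂μH[1] := by
        rw [← Finset.mul_sum, lintegral_biUnion_finset (As_disj Ω S hu) (fun s _ => As_meas Ω S s)]
    _ ≤ _ := by
        gcongr
        exact iUnion₂_subset fun s _ => inter_subset_left.trans inter_subset_left

theorem L4a (Ω : Set E2) (hΩo : IsOpen Ω) (hΩb : Bornology.IsBounded Ω) (hΩc : Convex ℝ Ω)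
    (f : E2 → ℝ) (hfc : ContinuousOn f (closure Ω)) (hf0 : ∀ x ∈ closure Ω, 0 ≤ f x)
    (hf1 : ∀ x ∈ Ω, DifferentiableAt ℝ f x)
    (hf2 : ∀ x ∈ Ω, DifferentiableAt ℝ (fun y => fderiv ℝ f y) x)
    (hsub : ∀ x ∈ Ω, 0 ≤ laplacian f x) (hH : μH[1] (frontier Ω) ≠ ⊤)
    (hfi : IntegrableOn f (frontier Ω) μH[1])
    (c : E2) (ρ : ℝ) (hρ : 0 < ρ) (hball : Metric.ball c ρ ⊆ Ω)
    (K : ℝ) (hK : ∀ x r, 0 ≤ r → Metric.closedBall x r ⊆ Ω → r < K)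
    (M : ℝ) (hM : ∀ x ∈ closure Ω, f x ≤ M) (η : ℝ) (hη : 0 < η) (hη1 : η ≤ 1 / 2) :
    ∫ x in Ω, f x ≤ K * (1 + η) * ((∫ x in frontier Ω, f x ∂μH[1]) + η * (μH[1] (frontier Ω)).toReal)
      + 4 * η * M * (volume Ω).toReal := by
  have hcΩ : c ∈ Ω := hball (Metric.mem_ball_self hρ)
  have hK0 : 0 < K := hK c 0 le_rfl (by simpa using hcΩ)
  have hM0 : 0 ≤ M := (hf0 c (subset_closure hcΩ)).trans (hM c (subset_closure hcΩ))
  have hcc : IsCompact (closure Ω) := hΩb.isCompact_closure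
  obtain ⟨d, hd, hdf⟩ := Metric.uniformContinuousOn_iff.mp (hcc.uniformContinuousOn_of_continuous hfc) η hη
  obtain ⟨D, hD⟩ := hcc.isBounded.subset_closedBall c
  have hD0 : 0 ≤ D := by
    have := hD (subset_closure hcΩ)
    simpa using this
  -- choose the ratio
  obtain ⟨a, ha0, ha1, ha2⟩ : ∃ a : ℝ, 0 < a ∧ a ≤ η ∧ 2 * a * D < d / 2 := by
    refine ⟨min η (d / (4 * (D + 1))) / 2, by positivity, ?_, ?_⟩
    · have := min_le_left η (d / (4 * (D + 1))); linarith
    · have h1 := min_le_right η (d / (4 * (D + 1)))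
      have h2 : d / (4 * (D + 1)) * (4 * (D + 1)) = d := by field_simp
      have h3 : 0 < d / (4 * (D + 1)) := by positivity
      nlinarith
  obtain ⟨ε, hε, hε1, hε2, hε3⟩ : ∃ ε : ℝ, 0 < ε ∧ ε ≤ η ∧ ε + ε ^ 2 < d / 2 ∧ ε + ε ^ 2 < a * ρ / 4 := by
    have hm : 0 < min η (min (d / 2) (a * ρ / 4)) := by positivity
    refine ⟨min η (min (d / 2) (a * ρ / 4)) / 4, by positivity, ?_, ?_, ?_⟩
    · have := min_le_left η (min (d / 2) (a * ρ / 4)); linarith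
    · have := min_le_left η (min (d / 2) (a * ρ / 4))
      have h2 := (min_le_right η (min (d / 2) (a * ρ / 4))).trans (min_le_left _ _)
      nlinarith
    · have := min_le_left η (min (d / 2) (a * ρ / 4))
      have h2 := (min_le_right η (min (d / 2) (a * ρ / 4))).trans (min_le_right _ _)
      nlinarith
  have haη : a ≤ 1 / 2 := ha1.trans hη1
  let Q : Set E2 := (fun z => a • c + (1 - a) • z) '' closure Ω
  have hQc : IsCompact Q := hcc.image (by fun_prop)
  have hQconv : Convex ℝ Q := by
    rintro _ ⟨x, hx, rfl⟩ _ ⟨y, hy, rfl⟩ p q hp hq hpq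
    refine ⟨p • x + q • y, hΩc.closure hx hy hp hq hpq, ?_⟩
    have hq' : q = 1 - p := by linarith
    subst hq'
    module
  have hQn : Q.Nonempty := ⟨_, c, subset_closure hcΩ, rfl⟩
  have hQΩ : Q ⊆ Ω := by
    rintro _ ⟨z, hz, rfl⟩
    exact seg_mem Ω hΩo hΩc hcΩ hz ha0 (by linarith) (by ring)
  obtain ⟨S, hS, hu, hQS, hP⟩ := polygon Ω hΩo hΩb Q hQc hQconv hQn hQΩ
  have hdc := dS_cont S hS
  have hlip := dS_lip S hS hu
  have hPc : IsCompact {x | 0 ≤ dS S hS x} :=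
    hcc.of_isClosed_subset (isClosed_le continuous_const hdc) (hP.trans subset_closure)
  have hKd : ∀ x, dS S hS x < K := by
    intro x
    rcases lt_or_ge (dS S hS x) 0 with h | h
    · linarith
    · refine hK x _ h ?_
      intro z hz
      apply hP
      change 0 ≤ dS S hS z
      rw [mem_closedBall_iff_norm] at hz
      have := hlip x z
      rw [norm_sub_rev] at this
      linarith
  have hQe : ∀ s ∈ S, ∀ z ∈ closure Ω, 0 ≤ a * ell s c + (1 - a) * ell s z := by
    intro s hs z hz
    rw [← ell_comb s c z a (1 - a) (by ring)]
    exact (hQS _ ⟨z, hz, rfl⟩).trans (dS_le S hS _ hs)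
  have hec : ∀ s ∈ S, (1 - a) * (ρ / 2) ≤ ell s c := by
    intro s hs
    have h1 : c + (-(ρ / 2)) • s.1 ∈ Ω := by
      apply hball
      rw [mem_ball_iff_norm, add_sub_cancel_left, norm_smul, hu s hs, norm_neg, Real.norm_of_nonneg (by positivity)]
      linarith
    have h2 := hQe s hs _ (subset_closure h1)
    rw [ell_add, inner_smul_right, real_inner_self_eq_norm_sq, hu s hs] at h2
    linarith
  set ε' := ε + 4 * (ε ^ 2 / 4) with hε'
  have hε'e : ε' = ε + ε ^ 2 := by rw [hε']; ring
  have hl2 := L2 Ω hΩo f hf1 hf2 hsub (fun x hx => hf0 x (subset_closure hx)) S hS hu hP hPc K ε (ε ^ 2 / 4) hK0 hε (by positivity) hKd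
  rw [← hε'] at hl2
  set A := {x | ε' < dS S hS x} with hA
  set B := {x | 0 < dS S hS x ∧ dS S hS x ≤ ε'} with hB
  have hε'0 : 0 < ε' := by rw [hε'e]; positivity
  have hAΩ : A ⊆ Ω := fun x hx => hP (hε'0.le.trans (le_of_lt hx))
  have hBΩ : B ⊆ Ω := fun x hx => hP hx.1.le
  have hAm : MeasurableSet A := (isOpen_lt continuous_const hdc).measurableSet
  have hBm : MeasurableSet B := (isOpen_lt continuous_const hdc).measurableSet.inter (isClosed_le hdc continuous_const).measurableSet
  have hfΩ : IntegrableOn f Ω := (hfc.integrableOn_compact hcc).mono_set subset_closure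
  have hV : volume Ω ≠ ⊤ := hΩb.measure_lt_top.ne
  -- the layer
  have hlayer : ∫ x in B, f x ≤ ε' * ((∫ x in frontier Ω, f x ∂μH[1]) + η * (μH[1] (frontier Ω)).toReal) := by
    let G : E2 → ℝ≥0∞ := fun x => ENNReal.ofReal ((closure Ω).indicator f x)
    have hGm : Measurable G := by
      apply ENNReal.measurable_ofReal.comp
      classical
      rw [← piecewise_eq_indicator]
      exact hfc.measurable_piecewise continuousOn_const isClosed_closure.measurableSet
    have hGf : ∀ x ∈ closure Ω, G x = ENNReal.ofReal (f x) := fun x hx => by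
      simp only [G, indicator_of_mem hx]
    have h3 := L3 Ω hΩo hΩb S hS hu hP ε' G hGm (ENNReal.ofReal η) (by
      rintro s hs x p h1 h2 hxs hp hps ⟨t, ht⟩
      have hxΩ : x ∈ closure Ω := subset_closure (hP h1.le)
      have hpΩ : p ∈ closure Ω := frontier_subset_closure hp
      rw [hGf x hxΩ, hGf p hpΩ, ← ENNReal.ofReal_add (hf0 p hpΩ) hη.le]
      apply ENNReal.ofReal_le_ofReal
      have h4 : ell s p = ell s x - t := by
        rw [ht, sub_eq_add_neg, ← neg_smul, ell_add, inner_smul_right, real_inner_self_eq_norm_sq, hu s hs]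
        ring
      have h5 : ell s c ≤ D := by
        have h6 := ell_add s p (c - p)
        rw [add_sub_cancel] at h6
        have h7 := real_inner_le_norm s.1 (c - p)
        have h8 := hD hpΩ
        rw [mem_closedBall_iff_norm, norm_sub_rev] at h8
        rw [hu s hs] at h7
        linarith
      have h6 := hQe s hs p hpΩ
      have h7 : - ell s p ≤ 2 * a * D := by nlinarith
      have h8 : dist x p < d := by
        rw [dist_eq_norm, ht, sub_sub_cancel, norm_smul, hu s hs, Real.norm_of_nonneg (by linarith)]
        linarith
      have h9 := hdf x hxΩ p hpΩ h8
      rw [Real.dist_eq] at h9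
      linarith [le_abs_self (f x - f p)])
    have hJ0 : 0 ≤ ∫ x in frontier Ω, f x ∂μH[1] :=
      setIntegral_nonneg isClosed_frontier.measurableSet fun x hx => hf0 x (frontier_subset_closure hx)
    have e1 : ENNReal.ofReal (∫ x in B, f x) = ∫⁻ x in B, G x := by
      rw [ofReal_integral_eq_lintegral_ofReal (hfΩ.mono_set hBΩ)]
      · exact setLIntegral_congr_fun hBm fun x hx => (hGf x (subset_closure (hBΩ hx))).symm
      · exact (ae_restrict_mem hBm).mono fun x hx => hf0 x (subset_closure (hBΩ hx))
    have e2 : ENNReal.ofReal (∫ x in frontier Ω, f x ∂μH[1]) = ∫⁻ x in frontier Ω, G x ∂μH[1] := by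
      rw [ofReal_integral_eq_lintegral_ofReal hfi]
      · exact setLIntegral_congr_fun isClosed_frontier.measurableSet fun x hx => (hGf x (frontier_subset_closure hx)).symm
      · exact (ae_restrict_mem isClosed_frontier.measurableSet).mono fun x hx => hf0 x (frontier_subset_closure hx)
    rw [lintegral_add_left hGm, ← e2, lintegral_const, Measure.restrict_apply_univ, ← e1,
      ← ENNReal.ofReal_toReal hH, ← ENNReal.ofReal_mul hη.le, ← ENNReal.ofReal_add hJ0 (by positivity),
      ← ENNReal.ofReal_mul hε'0.le] at h3
    exact (ENNReal.ofReal_le_ofReal_iff (by positivity)).mp h3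
  -- volume
  have hvol : (1 - 4 * η) * (volume Ω).toReal ≤ (volume A).toReal := by
    have h1 : AffineMap.homothety c ((1 - a) ^ 2) '' Ω ⊆ A := by
      rintro _ ⟨z, hz, rfl⟩
      change ε' < dS S hS _
      obtain ⟨s, hs, h⟩ := dS_ex S hS (AffineMap.homothety c ((1 - a) ^ 2) z)
      rw [h, AffineMap.homothety_apply, vsub_eq_sub, vadd_eq_add,
        show (1 - a) ^ 2 • (z - c) + c = (1 - (1 - a) ^ 2) • c + (1 - a) ^ 2 • z by module,
        ell_comb _ _ _ _ _ (by ring)]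
      have h2 := hQe s hs z (subset_closure hz)
      have h3 := hec s hs
      nlinarith [mul_nonneg (show 0 ≤ 1 - a by linarith) h2, mul_le_mul_of_nonneg_left h3 ha0.le]
    have h2 := measure_mono (μ := volume) h1
    rw [Measure.addHaar_image_homothety] at h2
    simp only [finrank_euclideanSpace_fin] at h2
    have h3 := ENNReal.toReal_mono ((measure_mono hAΩ).trans_lt hΩb.measure_lt_top).ne h2
    rw [ENNReal.toReal_mul, ENNReal.toReal_ofReal (abs_nonneg _), abs_of_nonneg (by positivity)] at h3
    refine le_trans ?_ h3
    gcongr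
    nlinarith [sq_nonneg a, mul_nonneg ha0.le ha0.le, sq_nonneg ((1 - a)^2 - (1 - 2 * a)), sq_nonneg (a * (1 - a))]
  have hsplit : ∫ x in Ω, f x = (∫ x in A, f x) + ∫ x in Ω \ A, f x := by
    rw [← setIntegral_union disjoint_sdiff_right (hΩo.measurableSet.diff hAm) (hfΩ.mono_set hAΩ) (hfΩ.mono_set diff_subset), union_diff_cancel hAΩ]
  have hrest : ∫ x in Ω \ A, f x ≤ 4 * η * M * (volume Ω).toReal := by
    calc ∫ x in Ω \ A, f x ≤ ∫ x in Ω \ A, M := by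
          apply setIntegral_mono_on (hfΩ.mono_set diff_subset) _ (hΩo.measurableSet.diff hAm) fun x hx => hM x (subset_closure hx.1)
          exact integrableOn_const ((measure_mono diff_subset).trans_lt hΩb.measure_lt_top).ne
      _ = (volume (Ω \ A)).toReal * M := by
          rw [setIntegral_const, smul_eq_mul]; rfl
      _ ≤ _ := by
          rw [measure_diff hAΩ hAm.nullMeasurableSet ((measure_mono hAΩ).trans_lt hΩb.measure_lt_top).ne, ENNReal.toReal_sub_of_le (measure_mono hAΩ) hV]
          nlinarith
  have hX : 0 ≤ ((∫ x in frontier Ω, f x ∂μH[1]) + η * (μH[1] (frontier Ω)).toReal) := by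
    have : 0 ≤ ∫ x in frontier Ω, f x ∂μH[1] :=
      setIntegral_nonneg isClosed_frontier.measurableSet fun x hx => hf0 x (frontier_subset_closure hx)
    positivity
  have hAf : ∫ x in A, f x ≤ K * (1 + η) * ((∫ x in frontier Ω, f x ∂μH[1]) + η * (μH[1] (frontier Ω)).toReal) := by
    refine hl2.trans ?_
    calc K / ε * ∫ x in B, f x ≤ K / ε * (ε' * ((∫ x in frontier Ω, f x ∂μH[1]) + η * (μH[1] (frontier Ω)).toReal)) := by gcongr
      _ = K * (1 + ε) * ((∫ x in frontier Ω, f x ∂μH[1]) + η * (μH[1] (frontier Ω)).toReal) := by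
          rw [hε'e]; field_simp
      _ ≤ _ := by gcongr
  linarith

theorem L4 (Ω : Set E2) (hΩo : IsOpen Ω) (hΩb : Bornology.IsBounded Ω) (hΩc : Convex ℝ Ω)
    (f : E2 → ℝ) (hfc : ContinuousOn f (closure Ω)) (hf0 : ∀ x ∈ closure Ω, 0 ≤ f x)
    (hf1 : ∀ x ∈ Ω, DifferentiableAt ℝ f x)
    (hf2 : ∀ x ∈ Ω, DifferentiableAt ℝ (fun y => fderiv ℝ f y) x)
    (hsub : ∀ x ∈ Ω, 0 ≤ laplacian f x) (hH : μH[1] (frontier Ω) ≠ ⊤)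
    (c : E2) (ρ : ℝ) (hρ : 0 < ρ) (hball : Metric.ball c ρ ⊆ Ω)
    (K : ℝ) (hK : ∀ x r, 0 ≤ r → Metric.closedBall x r ⊆ Ω → r < K) :
    ∫ x in Ω, f x ≤ K * ∫ x in frontier Ω, f x ∂μH[1] := by
  have hcc : IsCompact (closure Ω) := hΩb.isCompact_closure
  obtain ⟨M, hM⟩ := hcc.exists_bound_of_continuousOn hfc
  have hfi : IntegrableOn f (frontier Ω) μH[1] := by
    have : IsFiniteMeasure (μH[1].restrict (frontier Ω)) := ⟨by rw [Measure.restrict_apply_univ]; exact hH.lt_top⟩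
    refine Integrable.of_bound
      ((hfc.mono frontier_subset_closure).aestronglyMeasurable isClosed_frontier.measurableSet) M ?_
    exact (ae_restrict_mem isClosed_frontier.measurableSet).mono fun x hx => hM x (frontier_subset_closure hx)
  have key := L4a Ω hΩo hΩb hΩc f hfc hf0 hf1 hf2 hsub hH hfi c ρ hρ hball K hK M
    (fun x hx => (le_abs_self _).trans (hM x hx))
  set J := ∫ x in frontier Ω, f x ∂μH[1]
  set H := (μH[1] (frontier Ω)).toReal
  set V := (volume Ω).toReal
  have ht : Tendsto (fun η : ℝ => K * (1 + η) * (J + η * H) + 4 * η * M * V) (𝓝[>] 0) (𝓝 (K * J)) := by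
    have hc : Continuous (fun η : ℝ => K * (1 + η) * (J + η * H) + 4 * η * M * V) := by fun_prop
    have := hc.tendsto 0
    simp only [add_zero, mul_one, zero_mul, mul_zero] at this
    exact this.mono_left nhdsWithin_le_nhds
  refine ge_of_tendsto ht ?_
  filter_upwards [Ioc_mem_nhdsGT (show (0:ℝ) < 1 / 2 by norm_num)] with η hη
  exact key η hη.1 hη.2

theorem inrad (Ω : Set E2) (hΩo : IsOpen Ω) (hΩb : Bornology.IsBounded Ω) (hne : Ω.Nonempty) :
    ∃ (c : E2) (ρ : ℝ), 0 < ρ ∧ Metric.ball c ρ ⊆ Ω ∧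
      ∀ x r, 0 ≤ r → Metric.closedBall x r ⊆ Ω → r < 21 / 20 * ρ := by
  let T : Set ℝ := {r | 0 ≤ r ∧ ∃ x, Metric.closedBall x r ⊆ Ω}
  obtain ⟨M, hM⟩ := hΩb.exists_norm_le
  have hb : BddAbove T := by
    refine ⟨M, ?_⟩
    rintro r ⟨hr, x, hx⟩
    set e : E2 := EuclideanSpace.single 0 1
    have he : ‖e‖ = 1 := by simp [e]
    have h1 := hM (x + r • e) (hx (by simp [norm_smul, he, abs_of_nonneg hr]))
    have h2 := hM (x - r • e) (hx (by simp [norm_smul, he, abs_of_nonneg hr, dist_eq_norm]))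
    have h3 := norm_sub_le (x + r • e) (x - r • e)
    rw [show x + r • e - (x - r • e) = (2 * r) • e by module, norm_smul, he, Real.norm_of_nonneg (by positivity)] at h3
    linarith
  obtain ⟨z, hz⟩ := hne
  obtain ⟨r, hr, hzr⟩ := Metric.nhds_basis_closedBall.mem_iff.mp (hΩo.mem_nhds hz)
  have hrT : r ∈ T := ⟨hr.le, z, hzr⟩
  have hR : 0 < sSup T := lt_of_lt_of_le hr (le_csSup hb hrT)
  obtain ⟨r0, ⟨hr0, c, hc⟩, hlt⟩ := exists_lt_of_lt_csSup ⟨r, hrT⟩ (show sSup T * (41 / 42) < sSup T by linarith)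
  refine ⟨c, sSup T * (41 / 42), by positivity, ?_, ?_⟩
  · exact (Metric.ball_subset_ball hlt.le).trans (Metric.ball_subset_closedBall.trans hc)
  · intro x r hr hx
    have := le_csSup hb (show r ∈ T from ⟨hr, x, hx⟩)
    linarith

end PartC


/-- Hermite–Hadamard inequality for positive subharmonic functions on planar convex
domains, with constant `3`. -/
theorem hermite_hadamard_subharmonic_dim_two
    (Ω : Set (EuclideanSpace ℝ (Fin 2)))
    (hΩo : IsOpen Ω) (hΩb : Bornology.IsBounded Ω)
    (hΩc : Convex ℝ Ω) (hΩne : (interior Ω).Nonempty)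
    (f : EuclideanSpace ℝ (Fin 2) → ℝ)
    (hfc : ContinuousOn f (closure Ω))
    (hfpos : ∀ x ∈ Ω, 0 < f x)
    (hf1 : ∀ x ∈ Ω, DifferentiableAt ℝ f x)
    (hf2 : ∀ x ∈ Ω, DifferentiableAt ℝ (fun y => fderiv ℝ f y) x)
    (hsub : ∀ x ∈ Ω, 0 ≤ laplacian f x) :
    (1 / (volume Ω).toReal) * ∫ x in Ω, f x ≤
      (3 / (μH[(1 : ℝ)] (frontier Ω)).toReal) *
        ∫ x in frontier Ω, f x ∂μH[(1 : ℝ)] := by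
  have hne : Ω.Nonempty := hΩne.mono interior_subset
  obtain ⟨c, ρ, hρ, hball, hK⟩ := inrad Ω hΩo hΩb hne
  have hhb := haus_bound Ω hΩo hΩb hΩc c ρ hρ hball
  have hVt : volume Ω ≠ ⊤ := hΩb.measure_lt_top.ne
  have hH : μH[(1 : ℝ)] (frontier Ω) ≠ ⊤ :=
    (lt_of_le_of_lt hhb (ENNReal.mul_lt_top ENNReal.ofReal_lt_top hVt.lt_top)).ne
  have hf0 : ∀ x ∈ closure Ω, 0 ≤ f x := fun x hx =>
    le_on_closure (fun y hy => (hfpos y hy).le) continuousOn_const hfc hx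
  have h4 := L4 Ω hΩo hΩb hΩc f hfc hf0 hf1 hf2 hsub hH c ρ hρ hball _ hK
  have hJ0 : 0 ≤ ∫ x in frontier Ω, f x ∂μH[(1 : ℝ)] :=
    setIntegral_nonneg isClosed_frontier.measurableSet fun x hx => hf0 x (frontier_subset_closure hx)
  have hV : 0 < (volume Ω).toReal := ENNReal.toReal_pos (hΩo.measure_pos volume hne).ne' hVt
  have hHV : (μH[(1 : ℝ)] (frontier Ω)).toReal ≤ 20 / (7 * ρ) * (volume Ω).toReal := by
    have := ENNReal.toReal_mono (ENNReal.mul_lt_top ENNReal.ofReal_lt_top hVt.lt_top).ne hhb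
    rwa [ENNReal.toReal_mul, ENNReal.toReal_ofReal (by positivity)] at this
  have hH0 : 0 ≤ (μH[(1 : ℝ)] (frontier Ω)).toReal := ENNReal.toReal_nonneg
  by_cases hz : μH[(1 : ℝ)] (frontier Ω) = 0
  · have hJ : ∫ x in frontier Ω, f x ∂μH[(1 : ℝ)] = 0 := by
      rw [Measure.restrict_eq_zero.mpr hz, integral_zero_measure]
    rw [hJ, mul_zero] at h4 ⊢
    exact mul_nonpos_of_nonneg_of_nonpos (by positivity) h4
  · have hHp : 0 < (μH[(1 : ℝ)] (frontier Ω)).toReal := ENNReal.toReal_pos hz hH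
    set J := ∫ x in frontier Ω, f x ∂μH[(1 : ℝ)]
    set I := ∫ x in Ω, f x
    set H := (μH[(1 : ℝ)] (frontier Ω)).toReal
    set V := (volume Ω).toReal
    have h5 : 21 / 20 * ρ * H ≤ 3 * V := by
      calc 21 / 20 * ρ * H ≤ 21 / 20 * ρ * (20 / (7 * ρ) * V) := by gcongr
        _ = 3 * V := by field_simp; norm_num
    rw [one_div_mul_eq_div, div_mul_eq_mul_div, div_le_div_iff₀ hV hHp]
    calc I * H ≤ (21 / 20 * ρ * J) * H := by gcongr
      _ = (21 / 20 * ρ * H) * J := by ring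
      _ ≤ 3 * V * J := by gcongr
      _ = 3 * J * V := by ring
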